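/- In the uniform case p_1 = … = p_A = 1/A with M ≥ 2 (so that ρ = 1 + log_A M > 1), there exists a continuous 1-periodic function P_V : ℝ → ℝ with P_V(x) > 0 for all x such that Var(S_n) = P_V(log_A n) · n^ρ · (1 + o(1)) as n → ∞, where S_n is the size of the G-trie built from n random labelings. -/

import Mathlib

open MeasureTheory ProbabilityTheory Filter Topology

/-- A word `w` over `{1,…,M}×{1,…,A}` occurs in the labeling `L` of the infinite rooted
`M`-ary tree (nodes are identified with words over `Fin M`; the value of `L` on the root `[]`
is irrelevant) if along the path determined by the first components the labels are the
second components. -/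
def Occurs {M A : ℕ} (L : List (Fin M) → Fin A) (w : List (Fin M × Fin A)) : Prop :=
  ∀ t : Fin w.length, L ((w.take (t.1 + 1)).map Prod.fst) = (w.get t).2

/-- The number of labelings among `Ls` in which the word `w` occurs. -/
noncomputable def occCount {M A n : ℕ} (Ls : Fin n → List (Fin M) → Fin A)
    (w : List (Fin M × Fin A)) : ℕ :=
  Nat.card {i : Fin n // Occurs (Ls i) w}

/-- The G-trie built from the labelings `Ls`: all words occurring in at least two of them. -/
def GTrie {M A n : ℕ} (Ls : Fin n → List (Fin M) → Fin A) : Set (List (Fin M × Fin A)) :=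
  {w | 2 ≤ occCount Ls w}

/-- The size of the G-trie built from the labelings `Ls` (as a real number). -/
noncomputable def gtrieSize {M A n : ℕ} (Ls : Fin n → List (Fin M) → Fin A) : ℝ :=
  (GTrie Ls).ncard

/-- `μL` is the distribution of a random labeling of the infinite rooted `M`-ary tree where
all labels are independent with `P(letter = j) = p j`: every finite cylinder set has the
product probability. -/
def IsLabelingMeasure {M A : ℕ} (p : Fin A → ℝ) (μL : Measure (List (Fin M) → Fin A)) : Prop :=
  ∀ (s : Finset (List (Fin M))) (f : List (Fin M) → Fin A),
    μL {L | ∀ w ∈ s, L w = f w} = ∏ w ∈ s, ENNReal.ofReal (p (f w))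

/-- joint probability of two binomial counts being at most one -/
noncomputable def gJ (n : ℕ) (p p' τ : ℝ) : ℝ :=
  (1 - p - p' + τ) ^ n + n * (1 - p - p' + τ) ^ (n - 1) * (p + p' - τ)
    + n * (n - 1) * ((p - τ) * (p' - τ)) * (1 - p - p' + τ) ^ (n - 2)

noncomputable def gJ1 (n : ℕ) (p p' τ : ℝ) : ℝ :=
  n * (n - 1) * τ * (1 - p - p' + τ) ^ (n - 2)
    + n * (n - 1) * (n - 2) * ((p - τ) * (p' - τ)) * (1 - p - p' + τ) ^ (n - 3)

noncomputable def gJ2 (n : ℕ) (p p' τ : ℝ) : ℝ :=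
  n * (n - 1) * (1 - p - p' + τ) ^ (n - 4) *
    ((1 - p - p' + τ) ^ 2 + (n - 2) * (3 * τ - p - p') * (1 - p - p' + τ)
      + (n - 2) * (n - 3) * ((p - τ) * (p' - τ)))

noncomputable def gR (n : ℕ) (p p' τ : ℝ) : ℝ := gJ n p p' τ - gJ n p p' 0 - τ * gJ1 n p p' 0

lemma gJ_hasDeriv (m : ℕ) (p p' τ : ℝ) :
    HasDerivAt (gJ (m + 4) p p') (gJ1 (m + 4) p p' τ) τ := by
  have hid := hasDerivAt_id τ
  have hr : HasDerivAt (fun τ : ℝ => 1 - p - p' + τ) 1 τ := hid.const_add _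
  have h1 := (hr.pow (m + 4)).add (((hr.pow (m + 3)).const_mul ((m + 4 : ℕ) : ℝ)).mul
    (hid.const_sub (p + p')))
  have h2 := ((((hid.const_sub p).mul (hid.const_sub p')).const_mul
    (((m + 4 : ℕ) : ℝ) * (((m + 4 : ℕ) : ℝ) - 1)))).mul (hr.pow (m + 2))
  have h3 := h1.add h2
  refine (h3.congr_deriv ?_).congr_of_eventuallyEq ?_
  · simp only [gJ1, Pi.mul_apply, Pi.sub_apply, Pi.pow_apply, id,
      show m + 4 - 2 = m + 2 by omega, show m + 4 - 1 = m + 3 by omega,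
      show m + 4 - 3 = m + 1 by omega, show m + 3 - 1 = m + 2 by omega,
      show m + 2 - 1 = m + 1 by omega]
    push_cast
    ring
  · refine Filter.Eventually.of_forall fun s => ?_
    simp [gJ]

lemma gJ1_hasDeriv (m : ℕ) (p p' τ : ℝ) :
    HasDerivAt (gJ1 (m + 4) p p') (gJ2 (m + 4) p p' τ) τ := by
  have hid := hasDerivAt_id τ
  have hr : HasDerivAt (fun τ : ℝ => 1 - p - p' + τ) 1 τ := hid.const_add _
  have h1 := (hid.const_mul (((m + 4 : ℕ) : ℝ) * (((m + 4 : ℕ) : ℝ) - 1))).mul (hr.pow (m + 2))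
  have h2 := ((((hid.const_sub p).mul (hid.const_sub p')).const_mul
    (((m + 4 : ℕ) : ℝ) * (((m + 4 : ℕ) : ℝ) - 1) * (((m + 4 : ℕ) : ℝ) - 2)))).mul (hr.pow (m + 1))
  have h3 := h1.add h2
  refine (h3.congr_deriv ?_).congr_of_eventuallyEq ?_
  · simp only [gJ2, Pi.mul_apply, Pi.sub_apply, Pi.pow_apply, id,
      show m + 4 - 4 = m by omega, show m + 2 - 1 = m + 1 by omega,
      show m + 1 - 1 = m by omega]
    push_cast
    ring
  · refine Filter.Eventually.of_forall fun s => ?_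
    simp [gJ1]

/-- the size of the envelope -/
noncomputable def gE (x : ℝ) : ℝ := (1 + x) ^ 2 * Real.exp (-x)

lemma gJ2_bound (m : ℕ) (p p' τ : ℝ) (hτ : 0 ≤ τ) (hτp : τ ≤ p') (hpp : p' ≤ p) (hp : p ≤ 1 / 2) :
    |gJ2 (m + 4) p p' τ| ≤ Real.exp 4 * ((m + 4 : ℕ) : ℝ) ^ 2 * gE (((m + 4 : ℕ) : ℝ) * p) := by
  set n : ℝ := ((m + 4 : ℕ) : ℝ) with hn
  have hn4 : 4 ≤ n := by rw [hn]; push_cast; linarith [Nat.cast_nonneg (α := ℝ) m]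
  have hm : (m : ℝ) = n - 4 := by rw [hn]; push_cast; ring
  set r : ℝ := 1 - p - p' + τ with hr
  have hr0 : 0 ≤ r := by rw [hr]; linarith
  have hr1 : r ≤ 1 - p := by rw [hr]; linarith
  have hr1' : r ≤ 1 := by linarith
  have hpow : r ^ m ≤ Real.exp 4 * Real.exp (-(n * p)) := by
    calc r ^ m ≤ (Real.exp (-p)) ^ m := by
          gcongr
          linarith [Real.add_one_le_exp (-p)]
      _ = Real.exp (-(m * p)) := by rw [← Real.exp_nat_mul]; ring_nf
      _ ≤ Real.exp (4 + -(n * p)) := by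
          apply Real.exp_le_exp.2
          rw [hm]; nlinarith
      _ = _ := Real.exp_add _ _
  have hbr : |r ^ 2 + (n - 2) * (3 * τ - p - p') * r + (n - 2) * (n - 3) * ((p - τ) * (p' - τ))|
      ≤ (1 + n * p) ^ 2 := by
    have h1 : |r ^ 2| ≤ 1 := by
      rw [abs_of_nonneg (by positivity)]; exact pow_le_one₀ hr0 hr1'
    have h2 : |(n - 2) * (3 * τ - p - p') * r| ≤ n * (2 * p) := by
      rw [abs_mul, abs_mul]
      have a1 : |n - 2| ≤ n := by rw [abs_of_nonneg (by linarith)]; linarith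
      have a2 : |3 * τ - p - p'| ≤ 2 * p := by rw [abs_le]; constructor <;> linarith
      have a3 : |r| ≤ 1 := by rw [abs_of_nonneg hr0]; exact hr1'
      have a4 : 0 ≤ n * (2 * p) := mul_nonneg (by linarith) (by linarith)
      calc |n - 2| * |3 * τ - p - p'| * |r| ≤ n * (2 * p) * 1 := by gcongr
        _ = _ := by ring
    have h3 : |(n - 2) * (n - 3) * ((p - τ) * (p' - τ))| ≤ n * n * (p * p) := by
      have b1 : 0 ≤ n - 2 := by linarith
      have b2 : 0 ≤ n - 3 := by linarith
      have b3 : 0 ≤ p - τ := by linarith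
      have b4 : 0 ≤ p' - τ := by linarith
      rw [abs_of_nonneg (by positivity)]
      have c1 : n - 2 ≤ n := by linarith
      have c2 : n - 3 ≤ n := by linarith
      have c3 : p - τ ≤ p := by linarith
      have c4 : p' - τ ≤ p := by linarith
      have c5 : 0 ≤ p := by linarith
      gcongr
    calc _ ≤ |r ^ 2| + |(n - 2) * (3 * τ - p - p') * r|
          + |(n - 2) * (n - 3) * ((p - τ) * (p' - τ))| := abs_add_three _ _ _
      _ ≤ 1 + n * (2 * p) + n * n * (p * p) := by linarith
      _ = _ := by ring
  have : gJ2 (m + 4) p p' τ = n * (n - 1) * r ^ m * (r ^ 2 + (n - 2) * (3 * τ - p - p') * r +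
      (n - 2) * (n - 3) * ((p - τ) * (p' - τ))) := by
    simp only [gJ2, show m + 4 - 4 = m by omega]
    rfl
  rw [this, abs_mul, abs_mul, abs_mul, abs_of_nonneg (pow_nonneg hr0 m), gE]
  have d1 : |n| = n := abs_of_nonneg (by linarith)
  have d2 : |n - 1| ≤ n := by rw [abs_of_nonneg (by linarith)]; linarith
  rw [d1]
  calc n * |n - 1| * r ^ m * _ ≤ n * n * (Real.exp 4 * Real.exp (-(n * p))) * (1 + n * p) ^ 2 := by
        gcongr
    _ = _ := by ring

lemma gR_bound (n : ℕ) (hn : 4 ≤ n) (p p' τ : ℝ) (hτ : 0 ≤ τ) (hτp : τ ≤ p') (hpp : p' ≤ p)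
    (hp : p ≤ 1 / 2) :
    |gR n p p' τ| ≤ Real.exp 4 * (n : ℝ) ^ 2 * gE (n * p) * τ ^ 2 := by
  obtain ⟨m, rfl⟩ : ∃ m, n = m + 4 := ⟨n - 4, by omega⟩
  set B := Real.exp 4 * ((m + 4 : ℕ) : ℝ) ^ 2 * gE (((m + 4 : ℕ) : ℝ) * p) with hB
  have hB0 : 0 ≤ B := (abs_nonneg _).trans (gJ2_bound m p p' τ hτ hτp hpp hp)
  have h1 : ∀ s ∈ Set.Icc 0 τ, |gJ1 (m + 4) p p' s - gJ1 (m + 4) p p' 0| ≤ B * τ := by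
    intro s hs
    have := (convex_Icc (0 : ℝ) τ).norm_image_sub_le_of_norm_hasDerivWithin_le (C := B)
      (fun x _ => (gJ1_hasDeriv m p p' x).hasDerivWithinAt)
      (fun x hx => by
        rw [Real.norm_eq_abs]
        exact gJ2_bound m p p' x hx.1 (hx.2.trans hτp) hpp hp)
      (Set.left_mem_Icc.2 hτ) hs
    rw [Real.norm_eq_abs, Real.norm_eq_abs, sub_zero, abs_of_nonneg hs.1] at this
    exact this.trans (by gcongr; exact hs.2)
  have h2 := (convex_Icc (0 : ℝ) τ).norm_image_sub_le_of_norm_hasDerivWithin_le (C := B * τ)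
      (f := fun s => gJ (m + 4) p p' s - s * gJ1 (m + 4) p p' 0)
      (fun x _ => ((gJ_hasDeriv m p p' x).sub
        ((hasDerivAt_id x).mul_const (gJ1 (m + 4) p p' 0))).hasDerivWithinAt)
      (fun x hx => by
        rw [Real.norm_eq_abs, one_mul]
        exact h1 x hx)
      (Set.left_mem_Icc.2 hτ) (Set.right_mem_Icc.2 hτ)
  rw [Real.norm_eq_abs, Real.norm_eq_abs, sub_zero, abs_of_nonneg hτ] at h2
  have e : gR (m + 4) p p' τ = gJ (m + 4) p p' τ - τ * gJ1 (m + 4) p p' 0 -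
      (gJ (m + 4) p p' 0 - 0 * gJ1 (m + 4) p p' 0) := by
    simp only [gR]; ring
  rw [e]
  calc _ ≤ _ := h2
    _ = _ := by ring

lemma gE_nonneg (x : ℝ) : 0 ≤ gE x := by unfold gE; positivity

lemma gE_bound : ∃ C : ℝ, 0 < C ∧ ∀ x : ℝ, 0 ≤ x → gE x ≤ C ∧ gE x * x ^ 2 ≤ C := by
  refine ⟨24 * Real.exp 1, by positivity, fun x hx => ?_⟩
  have h4 := Real.pow_div_factorial_le_exp (1 + x) (by linarith) 4
  have he : Real.exp (-x) * Real.exp (1 + x) = Real.exp 1 := by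
    rw [← Real.exp_add]; ring_nf
  have hf : ((4 : ℕ).factorial : ℝ) = 24 := by norm_num [Nat.factorial]
  rw [hf, div_le_iff₀ (by norm_num)] at h4
  have key : (1 + x) ^ 4 * Real.exp (-x) ≤ 24 * Real.exp 1 := by
    calc _ ≤ (Real.exp (1 + x) * 24) * Real.exp (-x) := by gcongr
      _ = 24 * (Real.exp (-x) * Real.exp (1 + x)) := by ring
      _ = _ := by rw [he]
  unfold gE
  constructor
  · refine le_trans ?_ key
    gcongr
    · linarith
    · norm_num
  · refine le_trans ?_ key
    have : (1 + x) ^ 2 * x ^ 2 ≤ (1 + x) ^ 4 := by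
      have : x ^ 2 ≤ (1 + x) ^ 2 := by gcongr; linarith
      nlinarith [sq_nonneg (1 + x)]
    nlinarith [Real.exp_pos (-x)]

lemma pow_lim {ι : Type*} {l : Filter ι} (n : ι → ℕ) (hn : Tendsto n l atTop) (s : ι → ℝ) (s0 : ℝ)
    (hs : Tendsto s l (𝓝 s0)) (i : ℕ) :
    Tendsto (fun k => (1 - s k / n k) ^ (n k - i)) l (𝓝 (Real.exp (-s0))) := by
  have hnR : Tendsto (fun k => (n k : ℝ)) l atTop := tendsto_natCast_atTop_atTop.comp hn
  have hu : Tendsto (fun k => s k / n k) l (𝓝 0) := hs.div_atTop hnR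
  have hn1 : ∀ᶠ k in l, 1 ≤ n k := hn.eventually_ge_atTop 1
  have hni : ∀ᶠ k in l, i ≤ n k := hn.eventually_ge_atTop i
  have hu1 : ∀ᶠ k in l, s k / n k < 1 := hu.eventually_lt_const one_pos
  have h1 : Tendsto (fun k => (1 - s k / n k)) l (𝓝 1) := by
    simpa using tendsto_const_nhds (x := (1 : ℝ)).sub hu
  have main : Tendsto (fun k => (1 - s k / n k) ^ (n k)) l (𝓝 (Real.exp (-s0))) := by
    have lo : Tendsto (fun k => Real.exp (-(s k / (1 - s k / n k)))) l (𝓝 (Real.exp (-s0))) := by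
      have := (hs.div h1 one_ne_zero).neg.rexp
      simpa using this
    have hi : Tendsto (fun k => Real.exp (-(s k))) l (𝓝 (Real.exp (-s0))) := hs.neg.rexp
    refine tendsto_of_tendsto_of_tendsto_of_le_of_le' lo hi ?_ ?_
    · filter_upwards [hn1, hu1] with k hk1 hk2
      have hpos : 0 < 1 - s k / n k := by linarith
      have hnk : (0 : ℝ) < n k := by exact_mod_cast hk1
      have := Real.one_sub_inv_le_log_of_pos hpos
      rw [← Real.exp_log (pow_pos hpos (n k)), Real.log_pow]
      apply Real.exp_le_exp.2
      calc -(s k / (1 - s k / n k)) = n k * (1 - (1 - s k / n k)⁻¹) := by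
            have h3 : (n k : ℝ) - s k ≠ 0 := by
              intro h
              rw [sub_eq_zero] at h
              rw [← h, div_self hnk.ne'] at hk2
              exact lt_irrefl _ hk2
            field_simp
            ring
        _ ≤ _ := by gcongr
    · filter_upwards [hn1, hu1] with k hk1 hk2
      have hpos : 0 ≤ 1 - s k / n k := by linarith
      have hnk : (0 : ℝ) < n k := by exact_mod_cast hk1
      calc (1 - s k / n k) ^ n k ≤ (Real.exp (-(s k / n k))) ^ n k := by
            gcongr
            linarith [Real.add_one_le_exp (-(s k / n k))]
        _ = Real.exp (-(s k)) := by
            rw [← Real.exp_nat_mul]; congr 1; field_simp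
  have h2 : Tendsto (fun k => (1 - s k / n k) ^ (n k) / (1 - s k / n k) ^ i) l
      (𝓝 (Real.exp (-s0))) := by
    have := main.div (h1.pow i) (by simp)
    rw [one_pow, div_one] at this
    exact this
  refine h2.congr' ?_
  filter_upwards [hni, hu1] with k hk1 hk2
  have hpos : 0 < 1 - s k / n k := by linarith
  rw [div_eq_iff (pow_pos hpos i).ne', ← pow_add, Nat.sub_add_cancel hk1]

noncomputable def gphi (x y z : ℝ) : ℝ :=
  Real.exp (-(x + y)) * (Real.exp z * (1 + x + y - z + (x - z) * (y - z))
    - (1 + x) * (1 + y) - z * (x * y))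

lemma gJ_lim {ι : Type*} {l : Filter ι} (n : ι → ℕ) (hn : Tendsto n l atTop) (x y z : ι → ℝ)
    (x0 y0 z0 : ℝ) (hx : Tendsto x l (𝓝 x0)) (hy : Tendsto y l (𝓝 y0)) (hz : Tendsto z l (𝓝 z0)) :
    Tendsto (fun k => gJ (n k) (x k / n k) (y k / n k) (z k / n k)) l
      (𝓝 (Real.exp (-(x0 + y0 - z0)) * (1 + (x0 + y0 - z0) + (x0 - z0) * (y0 - z0)))) := by
  have hnR : Tendsto (fun k => (n k : ℝ)) l atTop := tendsto_natCast_atTop_atTop.comp hn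
  have hinv : Tendsto (fun k => (n k : ℝ)⁻¹) l (𝓝 0) := tendsto_inv_atTop_zero.comp hnR
  have hs := (hx.add hy).sub hz
  have p0 := pow_lim n hn _ _ hs 0
  have p1 := pow_lim n hn _ _ hs 1
  have p2 := pow_lim n hn _ _ hs 2
  have T := (p0.add (p1.mul hs)).add ((((tendsto_const_nhds (x := (1 : ℝ))).sub hinv).mul
    ((hx.sub hz).mul (hy.sub hz))).mul p2)
  have T2 := T.congr' (f₂ := fun k => gJ (n k) (x k / n k) (y k / n k) (z k / n k)) ?_
  · convert T2 using 2
    ring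
  · filter_upwards [hn.eventually_ge_atTop 1] with k hk
    have hnk : (n k : ℝ) ≠ 0 := by positivity
    have hr : 1 - x k / n k - y k / n k + z k / n k = 1 - (x k + y k - z k) / n k := by ring
    rw [gJ, hr]
    generalize (1 - (x k + y k - z k) / n k) = r
    rw [Nat.sub_zero]
    field_simp

lemma gJ1_zero_lim {ι : Type*} {l : Filter ι} (n : ι → ℕ) (hn : Tendsto n l atTop) (x y : ι → ℝ)
    (x0 y0 : ℝ) (hx : Tendsto x l (𝓝 x0)) (hy : Tendsto y l (𝓝 y0)) :
    Tendsto (fun k => gJ1 (n k) (x k / n k) (y k / n k) 0 / n k) l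
      (𝓝 (Real.exp (-(x0 + y0)) * (x0 * y0))) := by
  have hnR : Tendsto (fun k => (n k : ℝ)) l atTop := tendsto_natCast_atTop_atTop.comp hn
  have hinv : Tendsto (fun k => (n k : ℝ)⁻¹) l (𝓝 0) := tendsto_inv_atTop_zero.comp hnR
  have p3 := pow_lim n hn _ _ (hx.add hy) 3
  have T := ((((tendsto_const_nhds (x := (1 : ℝ))).sub hinv).mul
    ((tendsto_const_nhds (x := (1 : ℝ))).sub (hinv.const_mul 2))).mul (hx.mul hy)).mul p3
  have T2 := T.congr' (f₂ := fun k => gJ1 (n k) (x k / n k) (y k / n k) 0 / n k) ?_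
  · convert T2 using 2
    ring
  · filter_upwards [hn.eventually_ge_atTop 1] with k hk
    have hnk : (n k : ℝ) ≠ 0 := by positivity
    have hr : 1 - x k / n k - y k / n k + 0 = 1 - (x k + y k) / n k := by ring
    rw [gJ1, hr]
    generalize (1 - (x k + y k) / n k) = r
    field_simp
    ring

lemma gR_lim {ι : Type*} {l : Filter ι} (n : ι → ℕ) (hn : Tendsto n l atTop) (x y z : ι → ℝ)
    (x0 y0 z0 : ℝ) (hx : Tendsto x l (𝓝 x0)) (hy : Tendsto y l (𝓝 y0)) (hz : Tendsto z l (𝓝 z0)) :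
    Tendsto (fun k => gR (n k) (x k / n k) (y k / n k) (z k / n k)) l (𝓝 (gphi x0 y0 z0)) := by
  have a := gJ_lim n hn x y z x0 y0 z0 hx hy hz
  have b := gJ_lim n hn x y (fun _ => 0) x0 y0 0 hx hy tendsto_const_nhds
  have c := gJ1_zero_lim n hn x y x0 y0 hx hy
  have T := (a.sub b).sub (hz.mul c)
  have T2 := T.congr (f₂ := fun k => gR (n k) (x k / n k) (y k / n k) (z k / n k)) ?_
  · convert T2 using 2
    have : Real.exp (-(x0 + y0 - z0)) = Real.exp (-(x0 + y0)) * Real.exp z0 := by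
      rw [← Real.exp_add]; ring_nf
    rw [gphi, this, sub_zero]
    ring
  · intro k
    rw [gR, zero_div]
    ring

/-- the `m`-th term of the expansion of `gphi` -/
noncomputable def gterm (x y z : ℝ) (m : ℕ) : ℝ :=
  Real.exp (-(x + y)) * (z ^ m / (m.factorial : ℝ)) * ((1 + x - m) * (1 + y - m))

lemma gterm_abs (x y z : ℝ) (hz : 0 ≤ z) (hx : 0 ≤ x) (hy : 0 ≤ y) (m : ℕ) :
    |gterm x y z (m + 2)| ≤
      Real.exp (-(x + y)) * (2 * z ^ 2 * ((1 + x) * (1 + y))) * (z ^ m / (m.factorial : ℝ)) := by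
  have hf : (((m + 2).factorial : ℕ) : ℝ) = (m + 2) * (m + 1) * m.factorial := by
    rw [Nat.factorial_succ, Nat.factorial_succ]; push_cast; ring
  have h1 : ∀ w : ℝ, 0 ≤ w → |1 + w - ((m + 2 : ℕ) : ℝ)| ≤ (1 + w) * (m + 1) := by
    intro w hw
    have : (0 : ℝ) ≤ m := Nat.cast_nonneg m
    push_cast
    rw [abs_le]; constructor <;> nlinarith
  have hfp : (0 : ℝ) < m.factorial := by positivity
  have h2 := mul_le_mul (h1 x hx) (h1 y hy) (abs_nonneg _) (by positivity)
  rw [gterm, abs_mul, abs_mul, Real.abs_exp, abs_mul, abs_of_nonneg (a := z ^ (m + 2) / _) (by positivity), hf]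
  calc _ ≤ Real.exp (-(x + y)) * (z ^ (m + 2) / ((m + 2) * (m + 1) * m.factorial)) *
        ((1 + x) * (m + 1) * ((1 + y) * (m + 1))) := by gcongr
    _ = Real.exp (-(x + y)) * (z ^ 2 * ((1 + x) * (1 + y))) * (z ^ m / (m.factorial : ℝ)) *
        ((m + 1) / (m + 2)) := by
        field_simp
        ring
    _ ≤ Real.exp (-(x + y)) * (z ^ 2 * ((1 + x) * (1 + y))) * (z ^ m / (m.factorial : ℝ)) * 2 := by
        gcongr
        rw [div_le_iff₀ (by positivity)]
        have : (0 : ℝ) ≤ m := Nat.cast_nonneg m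
        linarith
    _ = _ := by ring

lemma exp_hasSum (z : ℝ) : HasSum (fun m : ℕ => z ^ m / (m.factorial : ℝ)) (Real.exp z) := by
  rw [Real.exp_eq_exp_ℝ]
  exact NormedSpace.expSeries_div_hasSum_exp z

lemma gterm_summable_abs (x y z : ℝ) (hz : 0 ≤ z) (hx : 0 ≤ x) (hy : 0 ≤ y) :
    Summable (fun m => |gterm x y z (m + 2)|) :=
  Summable.of_nonneg_of_le (fun _ => abs_nonneg _) (gterm_abs x y z hz hx hy)
    ((exp_hasSum z).summable.mul_left _)

lemma gterm_tsum_abs (x y z : ℝ) (hz : 0 ≤ z) (hzy : z ≤ y) (hyx : y ≤ x) :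
    ∑' m, |gterm x y z (m + 2)| ≤ 2 * z ^ 2 * gE x := by
  have hx : 0 ≤ x := by linarith
  have hy : 0 ≤ y := by linarith
  calc _ ≤ ∑' m : ℕ, Real.exp (-(x + y)) * (2 * z ^ 2 * ((1 + x) * (1 + y))) *
        (z ^ m / (m.factorial : ℝ)) :=
        (gterm_summable_abs x y z hz hx hy).tsum_le_tsum (gterm_abs x y z hz hx hy)
          ((exp_hasSum z).summable.mul_left _)
    _ = Real.exp (-(x + y)) * (2 * z ^ 2 * ((1 + x) * (1 + y))) * Real.exp z := by
        rw [tsum_mul_left, (exp_hasSum z).tsum_eq]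
    _ = (Real.exp (-(x + y)) * Real.exp z) * (2 * z ^ 2 * ((1 + x) * (1 + y))) := by ring
    _ ≤ Real.exp (-x) * (2 * z ^ 2 * ((1 + x) * (1 + x))) := by
        rw [← Real.exp_add]
        gcongr
        linarith
    _ = _ := by rw [gE]; ring

lemma hasSum_congr' {f g : ℕ → ℝ} {a b : ℝ} (h : HasSum f a) (hfg : ∀ m, f m = g m) (hab : a = b) :
    HasSum g b := by
  have : f = g := funext hfg
  rw [← this, ← hab]; exact h

lemma hasSum_shift {f : ℕ → ℝ} {a : ℝ} (k : ℕ) : HasSum (fun m => f (m + k)) (a - ∑ i ∈ Finset.range k, f i)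
    ↔ HasSum f a := hasSum_nat_add_iff' k

lemma gphi_hasSum (x y z : ℝ) : HasSum (fun m => gterm x y z (m + 2)) (gphi x y z) := by
  have e0 := exp_hasSum z
  have s1 : HasSum (fun m : ℕ => (m : ℝ) * (z ^ m / (m.factorial : ℝ))) (z * Real.exp z) := by
    rw [← hasSum_shift 1]
    refine hasSum_congr' (e0.mul_left z) (fun m => ?_) (by simp)
    rw [Nat.factorial_succ]
    have hfp : (m.factorial : ℝ) ≠ 0 := by positivity
    push_cast
    field_simp
    try ring
  have s2 : HasSum (fun m : ℕ => (m : ℝ) ^ 2 * (z ^ m / (m.factorial : ℝ)))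
      ((z ^ 2 + z) * Real.exp z) := by
    rw [← hasSum_shift 1]
    refine hasSum_congr' ((s1.add e0).mul_left z) (fun m => ?_) (by simp; ring)
    rw [Nat.factorial_succ]
    have hfp : (m.factorial : ℝ) ≠ 0 := by positivity
    push_cast
    field_simp
    try ring
  have T := (((e0.mul_left ((1 + x) * (1 + y))).sub (s1.mul_left (2 + x + y))).add s2).mul_left
    (Real.exp (-(x + y)))
  have T' : HasSum (gterm x y z) (Real.exp (-(x + y)) * (((1 + x) * (1 + y)) * Real.exp z
      - (2 + x + y) * (z * Real.exp z) + (z ^ 2 + z) * Real.exp z)) := by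
    refine hasSum_congr' T (fun m => ?_) rfl
    rw [gterm]; ring
  rw [← hasSum_shift 2] at T'
  refine hasSum_congr' T' (fun m => rfl) ?_
  simp only [Finset.sum_range_succ, Finset.sum_range_zero, gterm, gphi]
  norm_num
  ring

lemma gphi_bound (x y z : ℝ) (hz : 0 ≤ z) (hzy : z ≤ y) (hyx : y ≤ x) :
    |gphi x y z| ≤ 2 * z ^ 2 * gE x := by
  rw [← (gphi_hasSum x y z).tsum_eq]
  refine le_trans ?_ (gterm_tsum_abs x y z hz hzy hyx)
  have h := gterm_summable_abs x y z hz (by linarith) (by linarith)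
  have h2 : Summable (fun m => ‖gterm x y z (m + 2)‖) := h
  have := norm_tsum_le_tsum_norm h2
  exact this

noncomputable def gwt (b : ℝ) (d : ℕ) : ℝ := if d = 0 then 1 else 1 - 1 / b
noncomputable def gWe (e : ℕ) : ℝ := if e = 0 then 1 else 2

lemma gwt_nonneg (b : ℝ) (hb : 2 ≤ b) (d : ℕ) : 0 ≤ gwt b d := by
  unfold gwt; split_ifs
  · norm_num
  · have : 1 / b ≤ 1 := by rw [div_le_one (by linarith)]; linarith
    linarith
lemma gwt_le (b : ℝ) (hb : 2 ≤ b) (d : ℕ) : gwt b d ≤ 1 := by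
  unfold gwt; split_ifs
  · norm_num
  · have : 0 ≤ 1 / b := by positivity
    linarith
lemma gWe_nonneg (e : ℕ) : 0 ≤ gWe e := by
  unfold gWe; split_ifs <;> norm_num
lemma gWe_le (e : ℕ) : gWe e ≤ 2 := by
  unfold gWe; split_ifs <;> norm_num

/-- index set: `(K, d, e)` -/
abbrev GI := ℤ × ℕ × ℕ

noncomputable def gq (b a t : ℝ) (i : GI) : ℝ :=
  gWe i.2.2 * gwt b i.2.1 * ((b * a) ^ (i.1 + i.2.1) *
    gphi (t * a ^ (-(i.1 - i.2.2))) (t * a ^ (-i.1)) (t * a ^ (-(i.1 + i.2.1))))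

noncomputable def gQ (b a t : ℝ) : ℝ := ∑' i, gq b a t i

noncomputable def gbd (b a : ℝ) (i : GI) : ℝ :=
  (b / a) ^ (i.1 + i.2.1) * min 1 (a ^ (2 * (i.1 - i.2.2)))

def gshear : GI ≃ GI where
  toFun i := (i.1 + i.2.2, i.2.1, i.2.2)
  invFun i := (i.1 - i.2.2, i.2.1, i.2.2)
  left_inv i := by simp
  right_inv i := by simp

lemma gbd_nonneg (b a : ℝ) (hb : 2 ≤ b) (hba : b < a) (i : GI) : 0 ≤ gbd b a i := by
  have : 0 < a := by linarith
  unfold gbd; positivity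

lemma gbd_summable (b a : ℝ) (hb : 2 ≤ b) (hba : b < a) : Summable (gbd b a) := by
  have ha : 0 < a := by linarith
  have hb0 : 0 < b := by linarith
  have hr0 : 0 < b / a := by positivity
  have hr1 : b / a < 1 := by rw [div_lt_one ha]; exact hba
  rw [← gshear.summable_iff]
  have hgeo : Summable (fun e : ℕ => (b / a) ^ e) := summable_geometric_of_lt_one hr0.le hr1
  have hZ : Summable (fun i : ℤ => (b / a) ^ i * min 1 (a ^ (2 * i))) := by
    apply Summable.of_nat_of_neg
    · refine Summable.of_nonneg_of_le (fun n => by positivity) (fun n => ?_) hgeo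
      rw [zpow_natCast]
      calc _ ≤ (b / a) ^ n * 1 := by gcongr; exact min_le_left _ _
        _ = _ := by ring
    · have hg2 : Summable (fun e : ℕ => ((b * a)⁻¹) ^ e) := by
        apply summable_geometric_of_lt_one (by positivity)
        apply inv_lt_one_of_one_lt₀
        nlinarith
      refine Summable.of_nonneg_of_le (fun n => by positivity) (fun n => ?_) hg2
      calc _ ≤ (b / a) ^ (-(n : ℤ)) * a ^ (2 * (-(n : ℤ))) := by gcongr; exact min_le_right _ _
        _ = _ := by
          rw [zpow_mul, ← mul_zpow, zpow_neg, zpow_natCast, ← inv_pow]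
          congr 1
          rw [show (2 : ℤ) = ((2 : ℕ) : ℤ) by rfl, zpow_natCast]
          field_simp
  have hprod := hZ.mul_of_nonneg (hgeo.mul_of_nonneg hgeo (fun _ => by positivity)
    (fun _ => by positivity)) (fun _ => by positivity) (fun _ => by positivity)
  refine hprod.congr (fun i => ?_)
  obtain ⟨K, d, e⟩ := i
  simp only [gshear, gbd, Function.comp, Equiv.coe_fn_mk, add_sub_cancel_right]
  rw [zpow_add₀ hr0.ne', zpow_add₀ hr0.ne', zpow_natCast, zpow_natCast]
  ring

lemma gE_scaled (a t0 : ℝ) (ha : 0 < a) (ht0 : 0 < t0) : ∃ C : ℝ, 0 < C ∧ ∀ (t : ℝ) (i : ℤ),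
    t0 ≤ t → gE (t * a ^ (-i)) ≤ C * min 1 (a ^ (2 * i)) := by
  obtain ⟨C, hC, h⟩ := gE_bound
  refine ⟨C * (1 + t0⁻¹ ^ 2), by positivity, fun t i ht => ?_⟩
  have htp : 0 < t := by linarith
  have hx : 0 < t * a ^ (-i) := by positivity
  obtain ⟨h1, h2⟩ := h _ hx.le
  rw [mul_min_of_nonneg _ _ (by positivity)]
  apply le_min
  · have : 0 ≤ t0⁻¹ ^ 2 := by positivity
    nlinarith
  · have hai : 0 < a ^ i := by positivity
    have e2 : a ^ (2 * i) = (a ^ i) ^ 2 := by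
      rw [mul_comm, zpow_mul]; rfl
    rw [e2]
    rw [zpow_neg] at h2 ⊢
    have : gE (t * (a ^ i)⁻¹) ≤ C * (t⁻¹ * a ^ i) ^ 2 := by
      have : gE (t * (a ^ i)⁻¹) = (gE (t * (a ^ i)⁻¹) * (t * (a ^ i)⁻¹) ^ 2) * (t⁻¹ * a ^ i) ^ 2 := by
        field_simp
      rw [this]
      gcongr
    refine this.trans ?_
    have h3 : t⁻¹ ≤ t0⁻¹ := inv_anti₀ ht0 ht
    calc C * (t⁻¹ * a ^ i) ^ 2 ≤ C * (t0⁻¹ * a ^ i) ^ 2 := by gcongr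
      _ = C * (0 + t0⁻¹ ^ 2) * (a ^ i) ^ 2 := by ring
      _ ≤ _ := by gcongr; norm_num

lemma zpow_anti' (a : ℝ) (ha : 1 < a) {i j : ℤ} (h : i ≤ j) : a ^ (-j) ≤ a ^ (-i) :=
  zpow_le_zpow_right₀ ha.le (by omega)

/-- algebra: the main scaling -/
lemma g_scale (b a : ℝ) (hb : 0 < b) (ha : 0 < a) (t : ℝ) (k : ℤ) :
    (b * a) ^ k * (t * a ^ (-k)) ^ 2 = t ^ 2 * (b / a) ^ k := by
  rw [mul_pow, mul_zpow, div_zpow, zpow_neg]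
  have : a ^ k ≠ 0 := by positivity
  field_simp

lemma gterm_sum_bound (b a t0 t1 : ℝ) (hb : 2 ≤ b) (hba : b < a) (ht0 : 0 < t0) :
    ∃ C : ℝ, 0 < C ∧ ∀ (t : ℝ) (i : GI), t0 ≤ t → t ≤ t1 →
      gWe i.2.2 * gwt b i.2.1 * ((b * a) ^ (i.1 + i.2.1) *
        (2 * (t * a ^ (-(i.1 + i.2.1))) ^ 2 * gE (t * a ^ (-(i.1 - i.2.2))))) ≤ C * gbd b a i := by
  have ha : 0 < a := by linarith
  have hb0 : 0 < b := by linarith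
  obtain ⟨C, hC, h⟩ := gE_scaled a t0 ha ht0
  refine ⟨4 * (t1 ^ 2 + 1) * C, by positivity, fun t i h0 h1 => ?_⟩
  obtain ⟨K, d, e⟩ := i
  have htp : 0 < t := by linarith
  have hE := h t (K - e) h0
  have hs := g_scale b a hb0 ha t (K + d)
  have hE0 := gE_nonneg (t * a ^ (-(K - e : ℤ)))
  simp only [gbd]
  calc _ = gWe e * gwt b d * (2 * ((b * a) ^ (K + d : ℤ) * (t * a ^ (-(K + d : ℤ))) ^ 2) *
        gE (t * a ^ (-(K - e : ℤ)))) := by ring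
    _ ≤ 2 * 1 * (2 * (t ^ 2 * (b / a) ^ (K + d : ℤ)) * (C * min 1 (a ^ (2 * (K - e : ℤ))))) := by
        rw [hs]
        have := gWe_nonneg e
        have := gwt_nonneg b hb d
        have := gWe_le e
        have := gwt_le b hb d
        gcongr
    _ ≤ 2 * 1 * (2 * ((t1 ^ 2 + 1) * (b / a) ^ (K + d : ℤ)) * (C * min 1 (a ^ (2 * (K - e : ℤ))))) := by
        gcongr
        nlinarith
    _ = _ := by ring

lemma gq_bound (b a t0 t1 : ℝ) (hb : 2 ≤ b) (hba : b < a) (ht0 : 0 < t0) :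
    ∃ C : ℝ, 0 < C ∧ ∀ (t : ℝ) (i : GI), t0 ≤ t → t ≤ t1 → |gq b a t i| ≤ C * gbd b a i := by
  obtain ⟨C, hC, h⟩ := gterm_sum_bound b a t0 t1 hb hba ht0
  refine ⟨C, hC, fun t i h0 h1 => ?_⟩
  refine le_trans ?_ (h t i h0 h1)
  have ha : 0 < a := by linarith
  have ha1 : 1 < a := by linarith
  have htp : 0 < t := by linarith
  rw [gq, abs_mul, abs_mul, abs_mul, abs_of_nonneg (gWe_nonneg _), abs_of_nonneg (gwt_nonneg b hb _),
    abs_of_nonneg (a := (b * a) ^ _) (by positivity)]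
  have := gWe_nonneg i.2.2
  have := gwt_nonneg b hb i.2.1
  gcongr
  apply gphi_bound
  · positivity
  · gcongr 1
    exact zpow_anti' a ha1 (by omega)
  · gcongr 1
    exact zpow_anti' a ha1 (by omega)

lemma gphi_cont : Continuous (fun v : ℝ × ℝ × ℝ => gphi v.1 v.2.1 v.2.2) := by
  unfold gphi; fun_prop

lemma gq_cont (b a : ℝ) (i : GI) : Continuous (fun t => gq b a t i) := by
  unfold gq gphi; fun_prop

lemma gQ_contAt (b a t : ℝ) (hb : 2 ≤ b) (hba : b < a) (ht : 0 < t) : ContinuousAt (gQ b a) t := by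
  obtain ⟨C, hC, h⟩ := gq_bound b a (t / 2) (2 * t) hb hba (by positivity)
  have : ContinuousOn (gQ b a) (Set.Icc (t / 2) (2 * t)) := by
    refine continuousOn_tsum (u := fun i => C * gbd b a i) (fun i => (gq_cont b a i).continuousOn)
      ((gbd_summable b a hb hba).mul_left C) (fun i x hx => ?_)
    exact h x i hx.1 hx.2
  exact this.continuousAt (Icc_mem_nhds (by linarith) (by linarith))

lemma gQ_scale (b a t : ℝ) (hb : 2 ≤ b) (hba : b < a) : gQ b a (a * t) = b * a * gQ b a t := by
  have ha : a ≠ 0 := by linarith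
  have hb0 : b ≠ 0 := by linarith
  unfold gQ
  rw [← tsum_mul_left, ← ((Equiv.addRight (1 : ℤ)).prodCongr (Equiv.refl (ℕ × ℕ))).tsum_eq]
  congr 1
  ext ⟨K, d, e⟩
  simp only [gq, Equiv.prodCongr_apply, Prod.map, Equiv.coe_addRight, Equiv.refl_apply]
  have e1 : ∀ j : ℤ, a * t * a ^ (-(j + 1)) = t * a ^ (-j) := by
    intro j
    rw [neg_add, zpow_add₀ ha, zpow_neg_one]; field_simp
  rw [show (K + 1 - e : ℤ) = (K - e) + 1 by ring, show (K + 1 + d : ℤ) = (K + d) + 1 by ring, e1, e1, e1,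
    zpow_add_one₀ (mul_ne_zero hb0 ha)]
  ring

lemma gQ_scale_pow (b a t : ℝ) (hb : 2 ≤ b) (hba : b < a) (k : ℕ) :
    gQ b a (t * a ^ k) = (b * a) ^ k * gQ b a t := by
  induction k with
  | zero => simp
  | succ k ih =>
    rw [show t * a ^ (k + 1) = a * (t * a ^ k) by ring, gQ_scale b a _ hb hba, ih]; ring

lemma geom_left_summable (g : ℤ → ℝ) (C β : ℝ) (hβ : 1 < β) (hg : ∀ k, |g k| ≤ C * β ^ k) (K : ℤ) :
    Summable (fun e : ℕ => |g (K - e)|) ∧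
      ∑' e : ℕ, |g (K - e)| ≤ C * (1 - β⁻¹)⁻¹ * β ^ K := by
  have hβ0 : 0 < β := by linarith
  have hi : β⁻¹ < 1 := inv_lt_one_of_one_lt₀ hβ
  have hgeo := hasSum_geometric_of_lt_one (by positivity : 0 ≤ β⁻¹) hi
  have hle : ∀ e : ℕ, |g (K - e)| ≤ C * β ^ K * (β⁻¹) ^ e := by
    intro e
    refine (hg _).trans (le_of_eq ?_)
    rw [zpow_sub₀ hβ0.ne', zpow_natCast, inv_pow]; ring
  have hs : Summable (fun e : ℕ => |g (K - e)|) :=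
    Summable.of_nonneg_of_le (fun _ => abs_nonneg _) hle (hgeo.summable.mul_left _)
  refine ⟨hs, ?_⟩
  calc _ ≤ ∑' e : ℕ, C * β ^ K * (β⁻¹) ^ e := hs.tsum_le_tsum hle (hgeo.summable.mul_left _)
    _ = _ := by rw [tsum_mul_left, hgeo.tsum_eq]; ring

lemma psd_form (b θ : ℝ) (hb : 2 ≤ b) (hθ0 : 0 < θ) (hθ1 : θ < 1) (g : ℤ → ℝ)
    (C1 β1 C2 β2 : ℝ) (hβ1 : 1 < β1) (hβ2 : 1 < β2) (hg1 : ∀ k, |g k| ≤ C1 * β1 ^ k)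
    (hg2 : ∀ k, |g k| ≤ C2 * β2 ^ k) (h1 : β1 ^ 2 * θ < 1) (h2 : 1 < β2 ^ 2 * θ)
    (hsum : Summable (fun i : GI => gWe i.2.2 * gwt b i.2.1 * (θ ^ (i.1 + i.2.1) *
      (g i.1 * g (i.1 - i.2.2))))) :
    0 ≤ ∑' i : GI, gWe i.2.2 * gwt b i.2.1 * (θ ^ (i.1 + i.2.1) * (g i.1 * g (i.1 - i.2.2))) ∧
    ((∃ k, g k ≠ 0) →
      0 < ∑' i : GI, gWe i.2.2 * gwt b i.2.1 * (θ ^ (i.1 + i.2.1) * (g i.1 * g (i.1 - i.2.2)))) := by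
  set s : ℤ → ℝ := fun K => ∑' e : ℕ, g (K - e) with hs
  have hsm : ∀ K, Summable (fun e : ℕ => g (K - e)) := fun K =>
    (geom_left_summable g C1 β1 hβ1 hg1 K).1.of_abs
  have hrec : ∀ K, s K = g K + s (K - 1) := by
    intro K
    simp only [hs]
    rw [(hsm K).tsum_eq_zero_add]
    simp only [Nat.cast_zero, sub_zero, Nat.cast_add, Nat.cast_one]
    congr 2
    ext e; congr 1; ring
  have sb : ∀ C β : ℝ, 1 < β → (∀ k, |g k| ≤ C * β ^ k) → ∀ K,
      θ ^ K * s K ^ 2 ≤ (C * (1 - β⁻¹)⁻¹) ^ 2 * (β ^ 2 * θ) ^ K := by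
    intro C β hβ hg K
    obtain ⟨hS, hT⟩ := geom_left_summable g C β hβ hg K
    have hβ0 : 0 < β := by linarith
    have h3 : |s K| ≤ C * (1 - β⁻¹)⁻¹ * β ^ K := by
      refine le_trans ?_ hT
      have hS' : Summable (fun e : ℕ => ‖g (K - e)‖) := hS
      exact norm_tsum_le_tsum_norm hS'
    have h4 : s K ^ 2 ≤ (C * (1 - β⁻¹)⁻¹ * β ^ K) ^ 2 := by
      rw [← sq_abs]; gcongr
    calc _ ≤ θ ^ K * (C * (1 - β⁻¹)⁻¹ * β ^ K) ^ 2 := by gcongr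
      _ = _ := by
        rw [mul_zpow, ← zpow_natCast β 2, ← zpow_mul, mul_comm ((2 : ℕ) : ℤ) K, zpow_mul, zpow_natCast]; ring
  have hU : Summable (fun K : ℤ => θ ^ K * s K ^ 2) := by
    apply Summable.of_nat_of_neg
    · refine Summable.of_nonneg_of_le (fun n => by positivity) (fun n => sb C1 β1 hβ1 hg1 n) ?_
      simp only [zpow_natCast]
      exact (summable_geometric_of_lt_one (by positivity) h1).mul_left _
    · refine Summable.of_nonneg_of_le (fun n => by positivity) (fun n => sb C2 β2 hβ2 hg2 _) ?_
      simp only [zpow_neg, zpow_natCast, ← inv_pow]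
      exact (summable_geometric_of_lt_one (by positivity) (inv_lt_one_of_one_lt₀ h2)).mul_left _
  have hw : Summable (fun d : ℕ => gwt b d * θ ^ d) := by
    refine Summable.of_nonneg_of_le (fun d => mul_nonneg (gwt_nonneg b hb d) (by positivity))
      (fun d => ?_) (summable_geometric_of_lt_one hθ0.le hθ1)
    have := gwt_le b hb d
    have h5 : 0 ≤ θ ^ d := by positivity
    nlinarith
  have hD : 0 < ∑' d, gwt b d * θ ^ d := by
    have := hw.le_tsum 0 (fun d _ => mul_nonneg (gwt_nonneg b hb d) (by positivity))
    refine lt_of_lt_of_le ?_ this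
    simp [gwt]
  set D := ∑' d, gwt b d * θ ^ d with hDdef
  have hWs : ∀ K, HasSum (fun e : ℕ => gWe e * g (K - e)) (2 * s K - g K) := by
    intro K
    have h6 := ((hsm K).hasSum.mul_left 2).sub (hasSum_ite_eq 0 (g K))
    have : (fun e : ℕ => gWe e * g (K - e)) = (fun e : ℕ => 2 * g (K - e) - if e = 0 then g K else 0) := by
      ext e
      unfold gWe
      split_ifs with he
      · subst he; simp; ring
      · ring
    rw [this]; exact h6
  have hWabs : ∀ K, Summable (fun e : ℕ => ‖gWe e * g (K - e)‖) := by
    intro K; exact (hWs K).summable.abs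
  have hfib : ∀ K : ℤ, ∑' de : ℕ × ℕ, gWe de.2 * gwt b de.1 * (θ ^ (K + de.1) * (g K * g (K - de.2)))
      = D * (θ ^ K * s K ^ 2 - θ ^ K * s (K - 1) ^ 2) := by
    intro K
    have hwa : Summable (fun d : ℕ => ‖gwt b d * θ ^ d‖) := hw.abs
    have h7 := tsum_mul_tsum_of_summable_norm hwa (hWabs K)
    rw [(hWs K).tsum_eq, ← hDdef] at h7
    have : ∀ de : ℕ × ℕ, gWe de.2 * gwt b de.1 * (θ ^ (K + de.1) * (g K * g (K - de.2))) =
        (θ ^ K * g K) * (gwt b de.1 * θ ^ de.1 * (gWe de.2 * g (K - de.2))) := by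
      intro de
      rw [zpow_add₀ hθ0.ne', zpow_natCast]; ring
    simp_rw [this]
    rw [tsum_mul_left, ← h7]
    have h8 := hrec K
    have h9 : g K = s K - s (K - 1) := by linarith
    rw [h9]; ring
  have hU' : HasSum (fun K : ℤ => θ ^ K * s (K - 1) ^ 2) (θ * ∑' K : ℤ, θ ^ K * s K ^ 2) := by
    have := ((Equiv.addRight (-1 : ℤ)).hasSum_iff.2 hU.hasSum).mul_left θ
    have h10 : (fun K : ℤ => θ ^ K * s (K - 1) ^ 2) = (fun i => θ * ((fun K : ℤ => θ ^ K * s K ^ 2) ∘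
        (Equiv.addRight (-1 : ℤ))) i) := by
      ext K
      simp only [Function.comp, Equiv.coe_addRight]
      rw [← sub_eq_add_neg, zpow_sub_one₀ hθ0.ne']
      field_simp
    rw [h10]; exact this
  have htot : ∑' i : GI, gWe i.2.2 * gwt b i.2.1 * (θ ^ (i.1 + i.2.1) * (g i.1 * g (i.1 - i.2.2)))
      = D * ((1 - θ) * ∑' K : ℤ, θ ^ K * s K ^ 2) := by
    rw [hsum.tsum_prod]
    simp_rw [hfib]
    rw [tsum_mul_left, hU.tsum_sub hU'.summable, hU'.tsum_eq]
    ring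
  have h1θ : 0 < 1 - θ := by linarith
  have hnn : ∀ K : ℤ, 0 ≤ θ ^ K * s K ^ 2 := fun K => by positivity
  rw [htot]
  refine ⟨mul_nonneg hD.le (mul_nonneg h1θ.le (tsum_nonneg hnn)), fun ⟨k, hk⟩ => ?_⟩
  refine mul_pos hD (mul_pos h1θ ?_)
  have hex : ∃ K, s K ≠ 0 := by
    by_contra hcon
    push Not at hcon
    have := hrec k
    rw [hcon, hcon] at this
    apply hk; linarith
  obtain ⟨K, hK⟩ := hex
  exact hU.tsum_pos hnn K (by positivity)

noncomputable def gG (a t : ℝ) (s : ℕ) (k : ℤ) : ℝ :=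
  Real.exp (-(t * a ^ (-k))) * (1 + t * a ^ (-k) - s)

lemma gG_bound (a t : ℝ) (ha : 1 < a) (ht : 0 < t) (s : ℕ) (hs : 1 ≤ s) (β : ℝ) (hβ : 1 < β)
    (hβa : β ≤ a ^ s) : ∃ C : ℝ, ∀ k, |gG a t s k| ≤ C * β ^ k := by
  have hβ0 : 0 < β := by linarith
  have ha0 : 0 < a := by linarith
  have hs1 : (1 : ℝ) ≤ s := by exact_mod_cast hs
  have hpt : ∀ x : ℝ, 0 ≤ x → |Real.exp (-x) * (1 + x - s)| ≤ s * ((1 + x) * Real.exp (-x)) := by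
    intro x hx
    rw [abs_mul, Real.abs_exp]
    have : |1 + x - s| ≤ s * (1 + x) := by rw [abs_le]; constructor <;> nlinarith
    calc _ ≤ Real.exp (-x) * (s * (1 + x)) := by gcongr
      _ = _ := by ring
  set F : ℝ := (s + 1).factorial * Real.exp 1 with hF
  have hF0 : 0 < F := by positivity
  refine ⟨s * (1 + F * t⁻¹ ^ s), fun k => ?_⟩
  have hx : 0 < t * a ^ (-k) := by positivity
  refine (hpt _ hx.le).trans ?_
  rw [mul_assoc]
  refine mul_le_mul_of_nonneg_left ?_ (by linarith)
  set x := t * a ^ (-k) with hxdef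
  rcases le_or_gt 0 k with hk | hk
  · have h1 : (1 + x) * Real.exp (-x) ≤ 1 := by
      have := Real.add_one_le_exp x
      calc _ ≤ Real.exp x * Real.exp (-x) := by gcongr; linarith
        _ = 1 := by rw [← Real.exp_add]; simp
    have h2 : 1 ≤ β ^ k := one_le_zpow₀ hβ.le hk
    have h3 : 0 ≤ F * t⁻¹ ^ s := by positivity
    nlinarith
  · have h4 := Real.pow_div_factorial_le_exp (1 + x) (by linarith) (s + 1)
    rw [div_le_iff₀ (by positivity)] at h4
    have he : Real.exp (-x) * Real.exp (1 + x) = Real.exp 1 := by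
      rw [← Real.exp_add]; ring_nf
    have key : (1 + x) ^ (s + 1) * Real.exp (-x) ≤ F := by
      calc _ ≤ (Real.exp (1 + x) * (s + 1).factorial) * Real.exp (-x) := by gcongr
        _ = (s + 1).factorial * (Real.exp (-x) * Real.exp (1 + x)) := by ring
        _ = _ := by rw [he]
    have h5 : (1 + x) * Real.exp (-x) * x ^ s ≤ F := by
      refine le_trans ?_ key
      have : x ^ s ≤ (1 + x) ^ s := by gcongr; linarith
      calc _ ≤ (1 + x) * Real.exp (-x) * (1 + x) ^ s := by gcongr
        _ = _ := by ring
    have h6 : (a ^ s) ^ k ≤ β ^ k := by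
      obtain ⟨j, rfl⟩ : ∃ j : ℕ, k = -(j : ℤ) := ⟨k.natAbs, by omega⟩
      rw [zpow_neg, zpow_neg, zpow_natCast, zpow_natCast]
      gcongr
    have h7 : (a ^ s) ^ k = t ^ s * (x ^ s)⁻¹ := by
      have hak : x = t * (a ^ k)⁻¹ := by rw [hxdef, zpow_neg]
      have hak0 : 0 < a ^ k := by positivity
      have : (a ^ s) ^ k = (a ^ k) ^ s := by
        rw [← zpow_natCast, ← zpow_mul, ← zpow_natCast (a ^ k), ← zpow_mul, mul_comm]
      rw [this, hak, mul_pow, inv_pow]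
      field_simp
    have hxs : 0 < x ^ s := by positivity
    have h8 : (1 + x) * Real.exp (-x) ≤ F * (x ^ s)⁻¹ := by
      rw [← div_eq_mul_inv, le_div_iff₀ hxs]; exact h5
    have hβk : 0 < β ^ k := by positivity
    calc _ ≤ F * (x ^ s)⁻¹ := h8
      _ = F * t⁻¹ ^ s * ((a ^ s) ^ k) := by
          rw [h7, inv_pow]; field_simp
      _ ≤ F * t⁻¹ ^ s * β ^ k := by gcongr
      _ ≤ _ := by gcongr; linarith

noncomputable def gF (b a t : ℝ) (v : GI × ℕ) : ℝ :=
  gWe v.1.2.2 * gwt b v.1.2.1 * ((b * a) ^ (v.1.1 + v.1.2.1) *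
    gterm (t * a ^ (-(v.1.1 - v.1.2.2))) (t * a ^ (-v.1.1)) (t * a ^ (-(v.1.1 + v.1.2.1))) (v.2 + 2))

lemma gF_summable (b a t : ℝ) (hb : 2 ≤ b) (hba : b < a) (ht : 0 < t) : Summable (gF b a t) := by
  have ha : 0 < a := by linarith
  have ha1 : 1 < a := by linarith
  apply Summable.of_abs
  have habs : ∀ (i : GI) (m : ℕ), |gF b a t (i, m)| = gWe i.2.2 * gwt b i.2.1 * ((b * a) ^ (i.1 + i.2.1)) *
      |gterm (t * a ^ (-(i.1 - i.2.2))) (t * a ^ (-i.1)) (t * a ^ (-(i.1 + i.2.1))) (m + 2)| := by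
    intro i m
    have h1 := gWe_nonneg i.2.2
    have h2 := gwt_nonneg b hb i.2.1
    rw [gF, abs_mul, abs_mul, abs_mul, abs_of_nonneg h1, abs_of_nonneg h2,
      abs_of_nonneg (a := (b * a) ^ _) (by positivity)]
    ring
  rw [summable_prod_of_nonneg (fun v => abs_nonneg _)]
  obtain ⟨C, hC, h⟩ := gterm_sum_bound b a t t hb hba ht
  constructor
  · intro i
    simp_rw [habs]
    exact (gterm_summable_abs _ _ _ (by positivity) (by positivity) (by positivity)).mul_left _
  · refine Summable.of_nonneg_of_le (fun i => tsum_nonneg (fun m => abs_nonneg _)) (fun i => ?_)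
      ((gbd_summable b a hb hba).mul_left C)
    refine le_trans ?_ (h t i le_rfl le_rfl)
    simp_rw [habs]
    rw [tsum_mul_left, ← mul_assoc]
    have h1 := gWe_nonneg i.2.2
    have h2 := gwt_nonneg b hb i.2.1
    gcongr
    apply gterm_tsum_abs
    · positivity
    · gcongr 1
      exact zpow_anti' a ha1 (by omega)
    · gcongr 1
      exact zpow_anti' a ha1 (by omega)

lemma gF_eq (b a t : ℝ) (hb : 2 ≤ b) (hba : b < a) (i : GI) (m : ℕ) :
    gF b a t (i, m) = t ^ (m + 2) / ((m + 2).factorial : ℝ) *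
      (gWe i.2.2 * gwt b i.2.1 * ((b * a / a ^ (m + 2)) ^ (i.1 + i.2.1) *
      (gG a t (m + 2) i.1 * gG a t (m + 2) (i.1 - i.2.2)))) := by
  have ha : 0 < a := by linarith
  obtain ⟨K, d, e⟩ := i
  simp only [gF, gG, gterm]
  have h1 : (b * a / a ^ (m + 2)) ^ (K + d : ℤ) * t ^ (m + 2) =
      (b * a) ^ (K + d : ℤ) * (t * a ^ (-(K + d : ℤ))) ^ (m + 2) := by
    rw [div_zpow, mul_pow, ← zpow_natCast (a ^ (-(K + d : ℤ))), ← zpow_mul, neg_mul, zpow_neg,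
      ← zpow_natCast a, ← zpow_mul, mul_comm (K + d : ℤ)]
    ring
  have h2 : Real.exp (-(t * a ^ (-(K - e : ℤ)) + t * a ^ (-K))) =
      Real.exp (-(t * a ^ (-(K - e : ℤ)))) * Real.exp (-(t * a ^ (-K))) := by
    rw [← Real.exp_add]; ring_nf
  rw [h2]
  have hf : ((m + 2).factorial : ℝ) ≠ 0 := by positivity
  generalize ((m + 2).factorial : ℝ) = f at *
  generalize (1 + t * a ^ (-(K - e : ℤ)) - ((m + 2 : ℕ) : ℝ)) = X
  generalize (1 + t * a ^ (-K) - ((m + 2 : ℕ) : ℝ)) = Y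
  generalize Real.exp (-(t * a ^ (-(K - e : ℤ)))) = E1
  generalize Real.exp (-(t * a ^ (-K))) = E2
  calc _ = gWe e * gwt b d * (((b * a) ^ (K + d : ℤ) * (t * a ^ (-(K + d : ℤ))) ^ (m + 2)) / f * (E1 * E2 * (X * Y))) := by ring
    _ = _ := by rw [← h1]; ring

lemma gQ_pos (b a t : ℝ) (hb : 2 ≤ b) (hba : b < a) (ht : 0 < t) : 0 < gQ b a t := by
  have ha : 0 < a := by linarith
  have ha1 : 1 < a := by linarith
  have hS := gF_summable b a t hb hba ht
  have e1 : gQ b a t = ∑' m, ∑' i, gF b a t (i, m) := by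
    rw [← Summable.tsum_comm (f := fun m i => gF b a t (i, m))]
    · unfold gQ
      congr 1; ext i
      rw [gq, ← (gphi_hasSum _ _ _).tsum_eq, ← tsum_mul_left, ← tsum_mul_left]
      rfl
    · exact hS.prod_symm
  have hsl : ∀ m, Summable (fun i => gF b a t (i, m)) := fun m => hS.prod_symm.prod_factor m
  have key : ∀ m : ℕ, 0 ≤ ∑' i, gF b a t (i, m) ∧
      ((∃ k, gG a t (m + 2) k ≠ 0) → 0 < ∑' i, gF b a t (i, m)) := by
    intro m
    have hsm := hsl m
    simp_rw [gF_eq b a t hb hba] at hsm ⊢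
    have hc : 0 < t ^ (m + 2) / ((m + 2).factorial : ℝ) := by positivity
    rw [summable_mul_left_iff hc.ne'] at hsm
    rw [tsum_mul_left]
    set θ := b * a / a ^ (m + 2) with hθ
    have hθ0 : 0 < θ := by positivity
    have ham : 1 ≤ a ^ m := one_le_pow₀ ha1.le
    have hθ1 : θ < 1 := by
      rw [hθ, div_lt_one (by positivity)]
      calc b * a < a * a := by gcongr
        _ ≤ a ^ m * (a * a) := by nlinarith [mul_pos ha ha]
        _ = _ := by ring
    have hinv : θ⁻¹ ≤ a ^ (m + 2) := by
      rw [hθ, inv_div]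
      apply div_le_self (by positivity)
      nlinarith
    have hinv1 : 1 < θ⁻¹ := (one_lt_inv₀ hθ0).2 hθ1
    set v := √(θ⁻¹) with hv
    have hv2 : v ^ 2 = θ⁻¹ := Real.sq_sqrt (by positivity)
    have hv1 : 1 < v := by rw [hv, Real.lt_sqrt] <;> linarith
    have hβ2 : √v ^ 2 = v := Real.sq_sqrt (by positivity)
    have hβ1 : 1 < √v := by rw [Real.lt_sqrt] <;> linarith
    have hβa : √v ≤ a ^ (m + 2) := by
      refine le_trans ?_ hinv
      rw [← hv2]
      nlinarith
    obtain ⟨C1, hC1⟩ := gG_bound a t ha1 ht (m + 2) (by omega) (√v) hβ1 hβa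
    have ham2 : 1 < a ^ (m + 2) := one_lt_pow₀ ha1 (by omega)
    obtain ⟨C2, hC2⟩ := gG_bound a t ha1 ht (m + 2) (by omega) (a ^ (m + 2)) ham2 le_rfl
    have p := psd_form b θ hb hθ0 hθ1 (gG a t (m + 2)) C1 (√v) C2 (a ^ (m + 2)) hβ1 ham2 hC1 hC2
      (by
        rw [hβ2]
        have : θ = (v ^ 2)⁻¹ := by rw [hv2, inv_inv]
        rw [this, ← div_eq_mul_inv, div_lt_one (by positivity)]
        nlinarith)
      (by
        have : (a ^ (m + 2)) ^ 2 * θ = a ^ (m + 2) * (b * a) := by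
          rw [hθ]; field_simp
        rw [this]
        have hba1 : 1 < b * a := by nlinarith
        exact one_lt_mul_of_lt_of_le ham2 hba1.le) hsm
    exact ⟨mul_nonneg hc.le p.1, fun h => mul_pos hc (p.2 h)⟩
  rw [e1]
  refine Summable.tsum_pos hS.prod_symm.prod (fun m => (key m).1) 0 ((key 0).2 ?_)
  by_contra hcon
  push Not at hcon
  have h0 := hcon 0
  have h1 := hcon (-1)
  simp only [gG, mul_eq_zero, Real.exp_ne_zero, false_or] at h0 h1
  norm_num at h0 h1
  nlinarith

noncomputable def gf (n : ℕ) (b a : ℝ) (i : GI) : ℝ :=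
  if ((i.2.1 : ℤ) + i.2.2) < i.1 then
    gWe i.2.2 * gwt b i.2.1 * (b ^ (i.1 + i.2.1) *
      (a ^ (i.1 + i.2.1) * gR n (a ^ (-(i.1 - i.2.2))) (a ^ (-i.1)) (a ^ (-(i.1 + i.2.1)))
        - a ^ (2 * i.1 - i.2.2) * gR n (a ^ (-(i.1 - i.2.2))) (a ^ (-i.1))
            (a ^ (-(i.1 - i.2.2)) * a ^ (-i.1))))
  else 0

lemma gp_le (a : ℝ) (ha : 2 ≤ a) {j : ℤ} (hj : 1 ≤ j) : a ^ (-j) ≤ 1 / 2 := by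
  calc a ^ (-j) ≤ a ^ (-(1 : ℤ)) := zpow_anti' a (by linarith) hj
    _ = a⁻¹ := by simp
    _ ≤ 2⁻¹ := by gcongr
    _ = 1 / 2 := by norm_num

lemma gf_bound (n : ℕ) (hn : 4 ≤ n) (b a : ℝ) (hb : 2 ≤ b) (hba : b < a) (i : GI) :
    |gf n b a i| ≤ Real.exp 4 * (gWe i.2.2 * gwt b i.2.1 * ((b * a) ^ (i.1 + i.2.1) *
        (2 * (n * a ^ (-(i.1 + i.2.1))) ^ 2 * gE (n * a ^ (-(i.1 - i.2.2)))))) := by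
  obtain ⟨K, d, e⟩ := i
  have ha : 0 < a := by linarith
  have ha1 : 1 < a := by linarith
  have hb0 : 0 < b := by linarith
  have hW := gWe_nonneg e
  have hw := gwt_nonneg b hb d
  have hE := gE_nonneg (n * a ^ (-(K - e : ℤ)))
  unfold gf
  simp only
  split_ifs with h
  · set p := a ^ (-(K - e : ℤ)) with hp
    set p' := a ^ (-K) with hp'
    set q := a ^ (-(K + d : ℤ)) with hq
    have hp0 : 0 < p := by positivity
    have hp'0 : 0 < p' := by positivity
    have hq0 : 0 < q := by positivity
    have hp2 : p ≤ 1 / 2 := gp_le a (by linarith) (by omega)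
    have hpp : p' ≤ p := zpow_anti' a ha1 (by omega)
    have hqp : q ≤ p' := zpow_anti' a ha1 (by omega)
    have hmul : p * p' = a ^ (-(2 * K - e : ℤ)) := by
      rw [hp, hp', ← zpow_add₀ ha.ne']; congr 1; ring
    have hppq : p * p' ≤ q := by
      rw [hmul]; exact zpow_anti' a ha1 (by omega)
    have h1 := gR_bound n hn p p' q hq0.le hqp hpp hp2
    have h2 := gR_bound n hn p p' (p * p') (by positivity) (by nlinarith) hpp hp2
    have e1 : a ^ (2 * K - e : ℤ) * (p * p') = 1 := by
      rw [hmul, ← zpow_add₀ ha.ne']; simp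
    have e2 : a ^ (K + d : ℤ) * q = 1 := by
      rw [hq, ← zpow_add₀ ha.ne']; simp
    rw [abs_mul, abs_mul, abs_mul, abs_of_nonneg hW, abs_of_nonneg hw,
      abs_of_nonneg (a := b ^ _) (by positivity)]
    have key : |a ^ (K + d : ℤ) * gR n p p' q - a ^ (2 * K - e : ℤ) * gR n p p' (p * p')| ≤
        a ^ (K + d : ℤ) * (Real.exp 4 * (2 * (n * q) ^ 2 * gE (n * p))) := by
      calc _ ≤ a ^ (K + d : ℤ) * |gR n p p' q| + a ^ (2 * K - e : ℤ) * |gR n p p' (p * p')| := by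
            refine (abs_sub _ _).trans (le_of_eq ?_)
            rw [abs_mul, abs_mul, abs_of_pos (a := a ^ _) (by positivity),
              abs_of_pos (a := a ^ _) (by positivity)]
        _ ≤ a ^ (K + d : ℤ) * (Real.exp 4 * (n:ℝ)^2 * gE (n*p) * q^2) +
            a ^ (2 * K - e : ℤ) * (Real.exp 4 * (n:ℝ)^2 * gE (n*p) * (p * p')^2) := by gcongr
        _ = Real.exp 4 * (n:ℝ)^2 * gE (n*p) * ((a ^ (K + d : ℤ) * q) * q +
            (a ^ (2 * K - e : ℤ) * (p * p')) * (p * p')) := by ring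
        _ ≤ Real.exp 4 * (n:ℝ)^2 * gE (n*p) * ((a ^ (K + d : ℤ) * q) * q +
            (a ^ (K + d : ℤ) * q) * q) := by
            rw [e1, e2]; gcongr
        _ = _ := by ring
    calc _ ≤ gWe e * gwt b d * (b ^ (K + d : ℤ) *
          (a ^ (K + d : ℤ) * (Real.exp 4 * (2 * (n * q) ^ 2 * gE (n * p))))) := by gcongr
      _ = _ := by rw [mul_zpow]; ring
  · rw [abs_zero]; positivity

lemma gf_summable (n : ℕ) (hn : 4 ≤ n) (b a : ℝ) (hb : 2 ≤ b) (hba : b < a) :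
    Summable (gf n b a) := by
  obtain ⟨C, hC, h⟩ := gterm_sum_bound b a n n hb hba (by positivity)
  refine Summable.of_norm_bounded (g := fun i => Real.exp 4 * (C * gbd b a i))
    (((gbd_summable b a hb hba).mul_left C).mul_left _) (fun i => ?_)
  refine (gf_bound n hn b a hb hba i).trans ?_
  have := h n i le_rfl le_rfl
  gcongr

lemma gf_pt_lim {l : Filter ℕ} (b a : ℝ) (hb : 2 ≤ b) (hba : b < a) (n K0 : ℕ → ℕ) (t : ℕ → ℝ)
    (ts : ℝ) (hts : 0 < ts) (hn : Tendsto n l atTop) (hK : Tendsto K0 l atTop)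
    (ht : Tendsto t l (𝓝 ts)) (hnt : ∀ k, (n k : ℝ) = t k * a ^ (K0 k)) (i : GI) :
    Tendsto (fun k => gf (n k) b a (i.1 + K0 k, i.2.1, i.2.2) / (b * a) ^ (K0 k)) l
      (𝓝 (gq b a ts i)) := by
  obtain ⟨K, d, e⟩ := i
  have ha : 0 < a := by linarith
  have ha1 : 1 < a := by linarith
  have hb0 : 0 < b := by linarith
  have hnR : Tendsto (fun k => (n k : ℝ)) l atTop := tendsto_natCast_atTop_atTop.comp hn
  have hx : ∀ j : ℤ, Tendsto (fun k => t k * a ^ (-j)) l (𝓝 (ts * a ^ (-j))) := fun j => ht.mul_const _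
  set x : ℕ → ℝ := fun k => t k * a ^ (-(K - e : ℤ)) with hxd
  set y : ℕ → ℝ := fun k => t k * a ^ (-K) with hyd
  set z : ℕ → ℝ := fun k => t k * a ^ (-(K + d : ℤ)) with hzd
  have L1 := gR_lim n hn x y z _ _ _ (hx _) (hx _) (hx _)
  have gEc : Continuous gE := by unfold gE; fun_prop
  -- second piece
  have L2 : Tendsto (fun k => a ^ (K0 k) * gR (n k) (x k / n k) (y k / n k) (x k / n k * (y k / n k)))
      l (𝓝 0) := by
    have hbd : Tendsto (fun k => Real.exp 4 * gE (x k) * (x k * y k) ^ 2 * ((t k)⁻¹ * (n k : ℝ)⁻¹)) l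
        (𝓝 0) := by
      have h1 := (((gEc.tendsto _).comp (hx (K - e))).const_mul (Real.exp 4)).mul
        (((hx (K - e)).mul (hx K)).pow 2)
      have h2 := (ht.inv₀ hts.ne').mul hnR.inv_tendsto_atTop
      have h3 := h1.mul h2
      rw [mul_zero, mul_zero] at h3
      exact h3
    refine squeeze_zero_norm' ?_ hbd
    have hxn : Tendsto (fun k => x k * (n k : ℝ)⁻¹) l (𝓝 0) := by
      have := (hx (K - e)).mul hnR.inv_tendsto_atTop
      rw [mul_zero] at this
      exact this
    have ex := hxn.eventually (gt_mem_nhds (show (0:ℝ) < 1 / 2 by norm_num))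
    filter_upwards [ex, hn.eventually_ge_atTop 4, ht.eventually (lt_mem_nhds hts)] with k hk hk4 htk
    have hnk : (0:ℝ) < n k := by positivity
    have hxk : 0 < x k := by simp only [hxd]; positivity
    have hyk : 0 < y k := by simp only [hyd]; positivity
    have hyx : y k ≤ x k := by
      simp only [hxd, hyd]; gcongr 1; exact zpow_anti' a ha1 (by omega)
    rw [← div_eq_mul_inv] at hk
    have hB := gR_bound (n k) hk4 (x k / n k) (y k / n k) (x k / n k * (y k / n k)) (by positivity)
      (by
        have : 0 < y k / n k := by positivity
        nlinarith) (by gcongr) hk.le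
    rw [Real.norm_eq_abs, abs_mul, abs_of_pos (a := a ^ _) (by positivity)]
    have haK : a ^ (K0 k) = n k / t k := by rw [hnt k]; field_simp
    calc _ ≤ a ^ (K0 k) * _ := mul_le_mul_of_nonneg_left hB (by positivity)
      _ = _ := by
        rw [haK, show (n k : ℝ) * (x k / n k) = x k by field_simp]
        field_simp
  have L3 := ((L1.const_mul (a ^ (K + d : ℤ))).sub (L2.const_mul (a ^ (2 * K - e : ℤ)))).const_mul
    (gWe e * gwt b d * b ^ (K + d : ℤ))
  have hlim : gWe e * gwt b d * b ^ (K + d : ℤ) * (a ^ (K + d : ℤ) *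
      gphi (ts * a ^ (-(K - e : ℤ))) (ts * a ^ (-K)) (ts * a ^ (-(K + d : ℤ))) - a ^ (2 * K - e : ℤ) * 0)
      = gq b a ts (K, d, e) := by
    simp only [gq]; rw [mul_zpow]; ring
  rw [hlim] at L3
  refine L3.congr' ?_
  have hKZ : Tendsto (fun k => (K0 k : ℤ)) l atTop := tendsto_natCast_atTop_atTop.comp hK
  filter_upwards [hKZ.eventually_gt_atTop (d + e - K), ht.eventually (lt_mem_nhds hts)] with k hk htk
  have hs : ∀ j : ℤ, t k * a ^ (-j) / n k = a ^ (-(j + K0 k)) := by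
    intro j
    rw [hnt k, neg_add, zpow_add₀ ha.ne', zpow_neg a (K0 k : ℤ), zpow_natCast]
    field_simp
  unfold gf
  rw [if_pos (by simp only; omega)]
  simp only [hxd, hyd, hzd, hs]
  rw [show (K + K0 k - e : ℤ) = K - e + K0 k by ring, show (K + K0 k + d : ℤ) = K + d + K0 k by ring,
    show (2 * (K + K0 k) - e : ℤ) = 2 * K - e + K0 k + K0 k by ring,
    zpow_add₀ hb0.ne' (K + d), zpow_add₀ ha.ne' (K + d), zpow_add₀ ha.ne' (2 * K - e + K0 k),
    zpow_add₀ ha.ne' (2 * K - e), zpow_natCast, zpow_natCast, mul_pow]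
  field_simp

lemma gf_tsum_lim {l : Filter ℕ} (b a : ℝ) (hb : 2 ≤ b) (hba : b < a) (n K0 : ℕ → ℕ) (t : ℕ → ℝ)
    (ts : ℝ) (hn : Tendsto n l atTop) (hK : Tendsto K0 l atTop)
    (ht1 : ∀ k, 1 ≤ t k) (hta : ∀ k, t k ≤ a) (hts : 0 < ts)
    (ht : Tendsto t l (𝓝 ts)) (hnt : ∀ k, (n k : ℝ) = t k * a ^ (K0 k)) :
    Tendsto (fun k => (∑' i, gf (n k) b a i) / (b * a) ^ (K0 k)) l (𝓝 (gQ b a ts)) := by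
  have ha : 0 < a := by linarith
  have hb0 : 0 < b := by linarith
  have e1 : ∀ k, (∑' i, gf (n k) b a i) / (b * a) ^ (K0 k) =
      ∑' i : GI, gf (n k) b a (i.1 + K0 k, i.2.1, i.2.2) / (b * a) ^ (K0 k) := by
    intro k
    rw [tsum_div_const, ← ((Equiv.addRight (K0 k : ℤ)).prodCongr (Equiv.refl (ℕ × ℕ))).tsum_eq]
    rfl
  simp_rw [e1]
  obtain ⟨C, hC, h⟩ := gterm_sum_bound b a 1 a hb hba (by norm_num)
  refine tendsto_tsum_of_dominated_convergence (bound := fun i => Real.exp 4 * (C * gbd b a i))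
    (((gbd_summable b a hb hba).mul_left C).mul_left _)
    (fun i => gf_pt_lim b a hb hba n K0 t ts hts hn hK ht hnt i) ?_
  filter_upwards [hn.eventually_ge_atTop 4] with k hk i
  have h1 := gf_bound (n k) hk b a hb hba (i.1 + K0 k, i.2.1, i.2.2)
  have h2 := h (t k) i (ht1 k) (hta k)
  have hs : ∀ j : ℤ, (n k : ℝ) * a ^ (-(j + K0 k)) = t k * a ^ (-j) := by
    intro j
    rw [hnt k, neg_add, zpow_add₀ ha.ne', zpow_neg a (K0 k : ℤ), zpow_natCast]
    field_simp
  simp only at h1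
  rw [show (i.1 + K0 k - i.2.2 : ℤ) = i.1 - i.2.2 + K0 k by ring,
    show (i.1 + K0 k + i.2.1 : ℤ) = i.1 + i.2.1 + K0 k by ring, hs, hs,
    zpow_add₀ (by positivity : b * a ≠ 0), zpow_natCast] at h1
  rw [norm_div, Real.norm_eq_abs, Real.norm_eq_abs, abs_of_pos (a := (b * a) ^ _) (by positivity),
    div_le_iff₀ (by positivity)]
  refine h1.trans ?_
  calc _ = Real.exp 4 * (gWe i.2.2 * gwt b i.2.1 * ((b * a) ^ (i.1 + i.2.1 : ℤ) *
        (2 * (t k * a ^ (-(i.1 + i.2.1 : ℤ))) ^ 2 * gE (t k * a ^ (-(i.1 - i.2.2 : ℤ)))))) *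
        (b * a) ^ (K0 k) := by ring
    _ ≤ _ := by gcongr

lemma gfinal {M A : ℕ} (hM : 2 ≤ M) (hMA : M < A) (ρ : ℝ) (hρ : ρ = 1 + Real.logb A M)
    (V : ℕ → ℝ) (hV : ∀ n, 4 ≤ n → V n = ∑' i, gf n M A i) :
    ∃ PV : ℝ → ℝ, Continuous PV ∧ (∀ x, PV (x + 1) = PV x) ∧ (∀ x, 0 < PV x) ∧
      ∃ e : ℕ → ℝ, Tendsto e atTop (𝓝 0) ∧
        ∀ᶠ n : ℕ in atTop, V n = PV (Real.logb A n) * (n : ℝ) ^ ρ * (1 + e n) := by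
  have hb : (2:ℝ) ≤ M := by exact_mod_cast hM
  have hba : (M:ℝ) < A := by exact_mod_cast hMA
  have ha : (0:ℝ) < A := by linarith
  have ha1 : (1:ℝ) < A := by linarith
  have hAρ : (A:ℝ) ^ ρ = M * A := by
    rw [hρ, Real.rpow_add ha, Real.rpow_one, Real.rpow_logb ha ha1.ne' (by linarith)]; ring
  have hA1 : 1 < A := by omega
  set b : ℝ := (M : ℝ) with hbdef
  set a : ℝ := (A : ℝ) with hadef
  refine ⟨fun u => gQ b a (a ^ u) * a ^ (-(ρ * u)), ?_, ?_, ?_, fun n => V n / gQ b a n - 1, ?_, ?_⟩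
  · have h1 : Continuous fun u : ℝ => a ^ u := Real.continuous_const_rpow ha.ne'
    have h2 : Continuous fun u : ℝ => a ^ (-(ρ * u)) :=
      (Real.continuous_const_rpow ha.ne').comp (by fun_prop)
    refine Continuous.mul ?_ h2
    rw [continuous_iff_continuousAt]
    intro u
    exact ContinuousAt.comp (f := fun u : ℝ => a ^ u) (gQ_contAt b a _ hb hba (by positivity))
      h1.continuousAt
  · intro x
    have e1 : a ^ (x + 1) = a * a ^ x := by rw [Real.rpow_add ha, Real.rpow_one]; ring
    have e2 : a ^ (-(ρ * (x + 1))) = a ^ (-(ρ * x)) * (b * a)⁻¹ := by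
      rw [show -(ρ * (x + 1)) = -(ρ * x) + -ρ by ring, Real.rpow_add ha, Real.rpow_neg ha.le ρ, hAρ]
    simp only
    rw [e1, e2, gQ_scale b a _ hb hba]
    have : b * a ≠ 0 := by positivity
    field_simp
  · intro x
    have := gQ_pos b a (a ^ x) hb hba (by positivity)
    positivity
  · suffices h : Tendsto (fun n => V n / gQ b a n) atTop (𝓝 1) by
      simpa using h.sub_const 1
    apply tendsto_of_subseq_tendsto
    intro ns hns
    set t : ℕ → ℝ := fun n => (n : ℝ) / a ^ (Nat.log A n) with htdef
    have htmem : ∀ n : ℕ, n ≠ 0 → t n ∈ Set.Icc 1 a := by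
      intro n hn
      have h1 : A ^ (Nat.log A n) ≤ n := Nat.pow_log_le_self A hn
      have h2 : n < A ^ (Nat.log A n + 1) := Nat.lt_pow_succ_log_self hA1 n
      have h1' : a ^ (Nat.log A n) ≤ n := by rw [hadef]; exact_mod_cast h1
      have h2' : (n : ℝ) < a ^ (Nat.log A n + 1) := by rw [hadef]; exact_mod_cast h2
      have hpos : 0 < a ^ (Nat.log A n) := by positivity
      constructor
      · simp only [htdef]; rw [le_div_iff₀ hpos]; linarith
      · simp only [htdef]; rw [div_le_iff₀ hpos, ← pow_succ']; exact h2'.le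
    -- shift to avoid zero
    obtain ⟨N, hN⟩ := (hns.eventually_ge_atTop 4).exists_forall_of_atTop
    have hns' : Tendsto (fun k => ns (k + N)) atTop atTop := hns.comp (tendsto_add_atTop_nat N)
    have h4 : ∀ k, 4 ≤ ns (k + N) := fun k => hN _ (by omega)
    obtain ⟨ts, hts, φ, hφ, hlim⟩ := (isCompact_Icc (a := (1:ℝ)) (b := a)).tendsto_subseq
      (x := fun k => t (ns (k + N))) (fun k => htmem _ (by have := h4 k; omega))
    have hts0 : 0 < ts := by linarith [hts.1]
    refine ⟨fun k => φ k + N, ?_⟩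
    set n : ℕ → ℕ := fun k => ns (φ k + N) with hndef
    have hn : Tendsto n atTop atTop := hns'.comp hφ.tendsto_atTop
    have hn4 : ∀ k, 4 ≤ n k := fun k => h4 _
    have hmem : ∀ k, t (n k) ∈ Set.Icc 1 a := fun k => htmem _ (by have := hn4 k; omega)
    have hK : Tendsto (fun k => Nat.log A (n k)) atTop atTop := by
      refine Tendsto.comp (g := Nat.log A) ?_ hn
      refine tendsto_atTop_mono' _ (f₁ := Nat.log A) (Eventually.of_forall fun _ => le_rfl) ?_
      refine tendsto_atTop_atTop.2 fun m => ⟨A ^ m, fun x hx => ?_⟩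
      exact (Nat.le_log_iff_pow_le hA1 (by
        have : 0 < A ^ m := by positivity
        omega)).2 hx
    have hnt : ∀ k, (n k : ℝ) = t (n k) * a ^ (Nat.log A (n k)) := by
      intro k; simp only [htdef]; field_simp
    have L1 := gf_tsum_lim b a hb hba n (fun k => Nat.log A (n k)) (fun k => t (n k)) ts hn hK
      (fun k => (hmem k).1) (fun k => (hmem k).2) hts0 hlim hnt
    have L2 : Tendsto (fun k => gQ b a (t (n k))) atTop (𝓝 (gQ b a ts)) :=
      (gQ_contAt b a ts hb hba hts0).tendsto.comp hlim
    have hQ := gQ_pos b a ts hb hba hts0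
    have L3 := L1.div L2 hQ.ne'
    rw [div_self hQ.ne'] at L3
    refine L3.congr fun k => ?_
    change (∑' i, gf (n k) b a i) / (b * a) ^ (Nat.log A (n k)) / gQ b a (t (n k))
      = V (n k) / gQ b a (n k)
    have e1 : gQ b a (n k) = (b * a) ^ (Nat.log A (n k)) * gQ b a (t (n k)) := by
      rw [← gQ_scale_pow b a _ hb hba, ← hnt k]
    rw [hV _ (hn4 k), e1, div_div]
  · filter_upwards [eventually_ge_atTop 4] with n hn
    have hn0 : (0:ℝ) < n := by positivity
    have e1 : a ^ (Real.logb a n) = n := Real.rpow_logb ha ha1.ne' hn0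
    have e2 : a ^ (-(ρ * Real.logb a n)) = ((n : ℝ) ^ ρ)⁻¹ := by
      rw [Real.rpow_neg ha.le, mul_comm, Real.rpow_mul ha.le, e1]
    rw [e1, e2]
    have h1 := gQ_pos b a n hb hba hn0
    have h2 : (0:ℝ) < (n:ℝ) ^ ρ := by positivity
    field_simp
    ring

section Words
variable {M A : ℕ}

/-- constraints on a labeling imposed by a word -/
def gcs : List (Fin M × Fin A) → Finset (List (Fin M) × Fin A)
  | [] => ∅
  | x :: u => insert ([x.1], x.2) ((gcs u).image fun y => (x.1 :: y.1, y.2))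

lemma gcs_ne_nil (w : List (Fin M × Fin A)) : ∀ y ∈ gcs w, y.1 ≠ [] := by
  cases w with
  | nil => simp [gcs]
  | cons x u =>
    intro y hy
    simp only [gcs, Finset.mem_insert, Finset.mem_image] at hy
    rcases hy with rfl | ⟨z, _, rfl⟩ <;> simp

lemma occurs_cons (L : List (Fin M) → Fin A) (x : Fin M × Fin A) (u : List (Fin M × Fin A)) :
    Occurs L (x :: u) ↔ L [x.1] = x.2 ∧ Occurs (fun v => L (x.1 :: v)) u := by
  unfold Occurs
  constructor
  · intro h
    refine ⟨by simpa using h ⟨0, by simp⟩, fun t => ?_⟩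
    simpa using h ⟨t.1 + 1, by simp⟩
  · rintro ⟨h0, h⟩ ⟨t, ht⟩
    cases t with
    | zero => simpa using h0
    | succ t => simpa using h ⟨t, by simpa using ht⟩

lemma occurs_iff (w : List (Fin M × Fin A)) : ∀ L : List (Fin M) → Fin A,
    Occurs L w ↔ ∀ y ∈ gcs w, L y.1 = y.2 := by
  induction w with
  | nil => intro L; simp [Occurs, gcs]
  | cons x u ih =>
    intro L
    rw [occurs_cons, ih]
    simp only [gcs, Finset.mem_insert, Finset.mem_image]
    constructor
    · rintro ⟨h0, h⟩ y (rfl | ⟨z, hz, rfl⟩)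
      · exact h0
      · exact h z hz
    · intro h
      exact ⟨h ([x.1], x.2) (Or.inl rfl), fun y hy => h (x.1 :: y.1, y.2) (Or.inr ⟨y, hy, rfl⟩)⟩

/-- the event that all constraints of a finite set are satisfied -/
def gEv (c : Finset (List (Fin M) × Fin A)) : Set (List (Fin M) → Fin A) := {L | ∀ y ∈ c, L y.1 = y.2}

lemma gEv_meas (c : Finset (List (Fin M) × Fin A)) : MeasurableSet (gEv c) := by
  have : gEv c = ⋂ y ∈ c, (fun L : List (Fin M) → Fin A => L y.1) ⁻¹' {y.2} := by
    ext L; simp [gEv]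
  rw [this]
  exact Finset.measurableSet_biInter _ fun y _ => measurable_pi_apply y.1 (measurableSet_singleton _)

open Classical in
noncomputable def gQc (α : ℝ) (c : Finset (List (Fin M) × Fin A)) : ℝ :=
  if Set.InjOn Prod.fst (c : Set (List (Fin M) × Fin A)) then α ^ c.card else 0

lemma gEv_prob (hA : 2 ≤ A) (p : Fin A → ℝ) (hp : ∀ j, p j = 1 / (A : ℝ))
    (μL : Measure (List (Fin M) → Fin A)) (hμL : IsLabelingMeasure p μL)
    (c : Finset (List (Fin M) × Fin A)) : μL.real (gEv c) = gQc (1 / (A:ℝ)) c := by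
  classical
  unfold gQc
  split_ifs with h
  · have : NeZero A := ⟨by omega⟩
    let f : List (Fin M) → Fin A := fun v => if hv : ∃ a, (v, a) ∈ c then hv.choose else 0
    have hf : ∀ y ∈ c, f y.1 = y.2 := by
      intro y hy
      have hv : ∃ a, (y.1, a) ∈ c := ⟨y.2, hy⟩
      have : f y.1 = hv.choose := dif_pos hv
      rw [this]
      have := h hv.choose_spec hy rfl
      exact congrArg Prod.snd this
    have hE : gEv c = {L | ∀ w ∈ c.image Prod.fst, L w = f w} := by
      ext L
      simp only [gEv, Set.mem_ofPred_eq, Finset.mem_image, forall_exists_index, and_imp]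
      constructor
      · rintro H w y hy rfl
        rw [H y hy, hf y hy]
      · intro H y hy
        rw [H _ y hy rfl, hf y hy]
    rw [Measure.real, hE, hμL]
    simp only [hp]
    rw [Finset.prod_const, Finset.card_image_of_injOn h, ENNReal.toReal_pow,
      ENNReal.toReal_ofReal (by positivity)]
  · have : gEv c = ∅ := by
      ext L
      simp only [gEv, Set.mem_ofPred_eq, Set.mem_empty_iff_false, iff_false]
      intro H
      apply h
      intro y hy z hz hyz
      have h1 := H y hy
      have h2 := H z hz
      rw [hyz, h2] at h1
      exact Prod.ext hyz h1.symm
    rw [this]; simp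

noncomputable def gqq (α : ℝ) : List (Fin M × Fin A) → List (Fin M × Fin A) → ℝ
  | [], w' => α ^ w'.length
  | _ :: u, [] => α ^ (u.length + 1)
  | x :: u, x' :: u' => if x.1 = x'.1 then (if x.2 = x'.2 then α * gqq α u u' else 0)
      else α ^ (u.length + u'.length + 2)

lemma cons_map_inj (m : Fin M) : Function.Injective
    (fun y : List (Fin M) × Fin A => (m :: y.1, y.2)) := by
  rintro ⟨a, b⟩ ⟨c, d⟩ h
  simpa using h

lemma gQc_insert (α : ℝ) (x : Fin M × Fin A) (c : Finset (List (Fin M) × Fin A))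
    (hc : ∀ y ∈ c, y.1 ≠ []) :
    gQc α (insert ([x.1], x.2) (c.image fun y => (x.1 :: y.1, y.2))) = α * gQc α c := by
  have hnot : ([x.1], x.2) ∉ c.image fun y => (x.1 :: y.1, y.2) := by
    simp only [Finset.mem_image, not_exists, not_and]
    rintro y hy h
    apply hc y hy
    simpa using congrArg Prod.fst h
  have hinj : Set.InjOn Prod.fst ((insert ([x.1], x.2) (c.image fun y => (x.1 :: y.1, y.2)) :
      Finset (List (Fin M) × Fin A)) : Set (List (Fin M) × Fin A)) ↔
      Set.InjOn Prod.fst (c : Set (List (Fin M) × Fin A)) := by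
    constructor
    · intro H y hy z hz hyz
      have hy' : (x.1 :: y.1, y.2) ∈ ((insert ([x.1], x.2) (c.image fun y => (x.1 :: y.1, y.2)) :
        Finset (List (Fin M) × Fin A)) : Set (List (Fin M) × Fin A)) := by
        simp only [Finset.coe_insert, Finset.coe_image]
        exact Or.inr ⟨y, hy, rfl⟩
      have hz' : (x.1 :: z.1, z.2) ∈ ((insert ([x.1], x.2) (c.image fun y => (x.1 :: y.1, y.2)) :
        Finset (List (Fin M) × Fin A)) : Set (List (Fin M) × Fin A)) := by
        simp only [Finset.coe_insert, Finset.coe_image]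
        exact Or.inr ⟨z, hz, rfl⟩
      have := H hy' hz' (by simp [hyz])
      exact cons_map_inj x.1 this
    · intro H y hy z hz hyz
      simp only [Finset.coe_insert, Finset.coe_image] at hy hz
      rcases hy with rfl | ⟨y', hy, rfl⟩ <;> rcases hz with rfl | ⟨z', hz, rfl⟩
      · rfl
      · exact absurd (by simpa using hyz.symm) (hc z' hz)
      · exact absurd (by simpa using hyz) (hc y' hy)
      · have : y'.1 = z'.1 := by simpa using hyz
        rw [H hy hz this]
  unfold gQc
  rw [Finset.card_insert_of_notMem hnot, Finset.card_image_of_injective _ (cons_map_inj x.1)]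
  by_cases h : Set.InjOn Prod.fst (c : Set (List (Fin M) × Fin A))
  · rw [if_pos h, if_pos (hinj.2 h)]; ring
  · rw [if_neg h, if_neg (fun H => h (hinj.1 H))]; ring

lemma gcs_injOn (w : List (Fin M × Fin A)) :
    Set.InjOn Prod.fst (gcs w : Set (List (Fin M) × Fin A)) ∧ (gcs w).card = w.length := by
  induction w with
  | nil => simp [gcs]
  | cons x u ih =>
    have h := gQc_insert (1:ℝ) x (gcs u) (gcs_ne_nil u)
    constructor
    · by_contra hn
      have h2 : gQc (1:ℝ) (gcs (x :: u)) = 0 := by unfold gQc; rw [if_neg hn]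
      change gQc (1:ℝ) (gcs (x :: u)) = _ at h
      rw [h2] at h
      unfold gQc at h
      rw [if_pos ih.1] at h
      simp at h
    · rw [gcs, Finset.card_insert_of_notMem, Finset.card_image_of_injective _ (cons_map_inj x.1), ih.2]
      · simp
      · simp only [Finset.mem_image, not_exists, not_and]
        rintro y hy h
        apply gcs_ne_nil u y hy
        simpa using congrArg Prod.fst h

lemma gcs_head (w : List (Fin M × Fin A)) (x : Fin M × Fin A) : ∀ y ∈ gcs (x :: w),
    y.1.head? = some x.1 := by
  intro y hy
  simp only [gcs, Finset.mem_insert, Finset.mem_image] at hy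
  rcases hy with rfl | ⟨z, _, rfl⟩ <;> simp

lemma gQc_gcs (α : ℝ) (w : List (Fin M × Fin A)) : gQc α (gcs w) = α ^ w.length := by
  unfold gQc
  rw [if_pos (gcs_injOn w).1, (gcs_injOn w).2]

lemma gQc_union (α : ℝ) (w : List (Fin M × Fin A)) : ∀ w', gQc α (gcs w ∪ gcs w') = gqq α w w' := by
  induction w with
  | nil => intro w'; simp [gcs, gqq, gQc_gcs]
  | cons x u ih =>
    intro w'
    cases w' with
    | nil => rw [gqq, show gcs (x :: u) ∪ gcs ([] : List (Fin M × Fin A)) = gcs (x :: u) by simp [gcs],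
        gQc_gcs]; simp
    | cons x' u' =>
      rw [gqq]
      split_ifs with h1 h2
      · obtain ⟨m, a⟩ := x
        obtain ⟨m', a'⟩ := x'
        simp only at h1 h2
        subst h1; subst h2
        have : gcs ((m, a) :: u) ∪ gcs ((m, a) :: u') =
            insert ([m], a) ((gcs u ∪ gcs u').image fun y => (m :: y.1, y.2)) := by
          rw [gcs, gcs, Finset.image_union]
          ext y; simp only [Finset.mem_union, Finset.mem_insert]; tauto
        rw [this, ← ih u']
        apply gQc_insert α (m, a)
        intro y hy
        rcases Finset.mem_union.1 hy with hy | hy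
        · exact gcs_ne_nil _ y hy
        · exact gcs_ne_nil _ y hy
      · unfold gQc
        rw [if_neg]
        intro H
        have e1 : ([x.1], x.2) ∈ ((gcs (x :: u) ∪ gcs (x' :: u') : Finset (List (Fin M) × Fin A)) :
          Set (List (Fin M) × Fin A)) := by simp [gcs]
        have e2 : ([x'.1], x'.2) ∈ ((gcs (x :: u) ∪ gcs (x' :: u') : Finset (List (Fin M) × Fin A)) :
          Set (List (Fin M) × Fin A)) := by simp [gcs]
        have := H e1 e2 (by simp [h1])
        exact h2 (Prod.ext_iff.1 this).2
      · have hne : ∀ y ∈ gcs (x :: u), ∀ z ∈ gcs (x' :: u'), y.1 ≠ z.1 := by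
          intro y hy z hz hyz
          have h3 := gcs_head u x y hy
          have h4 := gcs_head u' x' z hz
          rw [hyz, h4] at h3
          exact h1 (Option.some.inj h3).symm
        unfold gQc
        rw [if_pos, Finset.card_union_of_disjoint, (gcs_injOn _).2, (gcs_injOn _).2]
        · simp only [List.length_cons]; congr 1; ring
        · rw [Finset.disjoint_left]
          intro y hy hz
          exact hne y hy y hz rfl
        · intro y hy z hz hyz
          rw [Finset.coe_union] at hy hz
          rcases hy with hy | hy <;> rcases hz with hz | hz
          · exact (gcs_injOn _).1 hy hz hyz
          · exact absurd hyz (hne y hy z hz)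
          · exact absurd hyz.symm (hne z hz y hy)
          · exact (gcs_injOn _).1 hy hz hyz

lemma gqq_symm (α : ℝ) (w w' : List (Fin M × Fin A)) : gqq α w w' = gqq α w' w := by
  rw [← gQc_union, ← gQc_union, Finset.union_comm]

def gOc (w : List (Fin M × Fin A)) : Set (List (Fin M) → Fin A) := {L | Occurs L w}

lemma gOc_eq (w : List (Fin M × Fin A)) : gOc w = gEv (gcs w) := by
  ext L; exact occurs_iff w L

lemma gOc_inter (w w' : List (Fin M × Fin A)) : gOc w ∩ gOc w' = gEv (gcs w ∪ gcs w') := by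
  ext L
  simp only [gOc_eq, gEv, Set.mem_inter_iff, Set.mem_ofPred_eq, Finset.mem_union]
  constructor
  · rintro ⟨h1, h2⟩ y (hy | hy)
    · exact h1 y hy
    · exact h2 y hy
  · intro h
    exact ⟨fun y hy => h y (Or.inl hy), fun y hy => h y (Or.inr hy)⟩

lemma gOc_meas (w : List (Fin M × Fin A)) : MeasurableSet (gOc w) := by
  rw [gOc_eq]; exact gEv_meas _

lemma gOc_prob (hA : 2 ≤ A) (p : Fin A → ℝ) (hp : ∀ j, p j = 1 / (A : ℝ))
    (μL : Measure (List (Fin M) → Fin A)) (hμL : IsLabelingMeasure p μL)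
    (w : List (Fin M × Fin A)) : μL.real (gOc w) = (1 / (A:ℝ)) ^ w.length := by
  rw [gOc_eq, gEv_prob hA p hp μL hμL, gQc_gcs]

lemma gOc_prob2 (hA : 2 ≤ A) (p : Fin A → ℝ) (hp : ∀ j, p j = 1 / (A : ℝ))
    (μL : Measure (List (Fin M) → Fin A)) (hμL : IsLabelingMeasure p μL)
    (w w' : List (Fin M × Fin A)) : μL.real (gOc w ∩ gOc w') = gqq (1 / (A:ℝ)) w w' := by
  rw [gOc_inter, gEv_prob hA p hp μL hμL, gQc_union]

end Words

section WordSums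
variable {M A : ℕ}

def gwl (M A : ℕ) : ℕ → Finset (List (Fin M × Fin A))
  | 0 => {[]}
  | k + 1 => ((Finset.univ : Finset (Fin M × Fin A)) ×ˢ gwl M A k).image fun y => y.1 :: y.2

lemma mem_gwl (k : ℕ) : ∀ w : List (Fin M × Fin A), w ∈ gwl M A k ↔ w.length = k := by
  induction k with
  | zero => intro w; simp [gwl]
  | succ k ih =>
    intro w
    simp only [gwl, Finset.mem_image, Finset.mem_product, Finset.mem_univ, true_and, ih]
    constructor
    · rintro ⟨y, hy, rfl⟩; simp [hy]
    · intro h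
      cases w with
      | nil => simp at h
      | cons x u => exact ⟨(x, u), by simpa using h, rfl⟩

lemma gwl_sum_succ (k : ℕ) (f : List (Fin M × Fin A) → ℝ) :
    ∑ w ∈ gwl M A (k + 1), f w = ∑ x : Fin M × Fin A, ∑ u ∈ gwl M A k, f (x :: u) := by
  rw [gwl, Finset.sum_image, Finset.sum_product]
  rintro ⟨a, b⟩ _ ⟨c, d⟩ _ h
  simpa using h

lemma gwl_sum_const (k : ℕ) (c : ℝ) : ∑ _w ∈ gwl M A k, c = ((M:ℝ) * A) ^ k * c := by
  induction k with
  | zero => simp [gwl]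
  | succ k ih =>
    rw [gwl_sum_succ]
    simp only [ih]
    simp
    ring

/-- pair sum over words -/
noncomputable def gT (M A : ℕ) (k K : ℕ) (F : ℝ → ℝ) : ℝ :=
  ∑ w ∈ gwl M A k, ∑ w' ∈ gwl M A K, F (gqq (1 / (A:ℝ)) w w')

lemma gT_symm (k K : ℕ) (F : ℝ → ℝ) : gT M A k K F = gT M A K k F := by
  unfold gT
  rw [Finset.sum_comm]
  simp_rw [gqq_symm (1 / (A:ℝ))]

lemma gT_zero (K : ℕ) (F : ℝ → ℝ) : gT M A 0 K F = ((M:ℝ) * A) ^ K * F ((1 / (A:ℝ)) ^ K) := by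
  unfold gT
  simp only [gwl, Finset.sum_singleton]
  rw [← gwl_sum_const]
  refine Finset.sum_congr rfl fun w hw => ?_
  rw [gqq, (mem_gwl K w).1 hw]

lemma sum_fin_if_ne (N : ℕ) (i : Fin N) (x y : ℝ) :
    ∑ j : Fin N, (if i = j then x else y) = x + ((N:ℝ) - 1) * y := by
  have : ∀ j : Fin N, (if i = j then x else y) = y + (if i = j then x - y else 0) := by
    intro j; split_ifs <;> ring
  simp_rw [this, Finset.sum_add_distrib]
  simp
  ring

lemma gT_succ (k K : ℕ) (F : ℝ → ℝ) : gT M A (k + 1) (K + 1) F =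
    (M:ℝ) * A * gT M A k K (fun τ => F (1 / (A:ℝ) * τ))
      + (M:ℝ) * A * (A - 1) * (((M:ℝ) * A) ^ (k + K) * F 0)
      + (M:ℝ) * (M - 1) * A ^ 2 * (((M:ℝ) * A) ^ (k + K) * F ((1 / (A:ℝ)) ^ (k + K + 2))) := by
  unfold gT
  rw [gwl_sum_succ]
  have h1 : ∀ x x' : Fin M × Fin A, ∑ u ∈ gwl M A k, ∑ u' ∈ gwl M A K,
      F (gqq (1 / (A:ℝ)) (x :: u) (x' :: u')) =
      if x.1 = x'.1 then (if x.2 = x'.2 then gT M A k K (fun τ => F (1 / (A:ℝ) * τ))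
        else ((M:ℝ) * A) ^ (k + K) * F 0)
      else ((M:ℝ) * A) ^ (k + K) * F ((1 / (A:ℝ)) ^ (k + K + 2)) := by
    intro x x'
    simp only [gqq]
    split_ifs
    · rfl
    · simp_rw [gwl_sum_const]; rw [pow_add]; ring
    · rw [pow_add, mul_assoc, ← gwl_sum_const, ← gwl_sum_const]
      refine Finset.sum_congr rfl fun u hu => ?_
      rw [gwl_sum_const, ← gwl_sum_const]
      refine Finset.sum_congr rfl fun u' hu' => ?_
      rw [(mem_gwl _ _).1 hu, (mem_gwl _ _).1 hu']
  have h2 : ∀ x : Fin M × Fin A, ∑ u ∈ gwl M A k, ∑ w' ∈ gwl M A (K + 1),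
      F (gqq (1 / (A:ℝ)) (x :: u) w') =
      gT M A k K (fun τ => F (1 / (A:ℝ) * τ)) + (A - 1) * (((M:ℝ) * A) ^ (k + K) * F 0)
      + ((M:ℝ) - 1) * (A * (((M:ℝ) * A) ^ (k + K) * F ((1 / (A:ℝ)) ^ (k + K + 2)))) := by
    intro x
    simp_rw [gwl_sum_succ]
    rw [Finset.sum_comm]
    simp_rw [h1]
    rw [Fintype.sum_prod_type]
    have h3 : ∀ m : Fin M, ∑ a : Fin A, (if x.1 = m then (if x.2 = a then gT M A k K (fun τ => F (1 / (A:ℝ) * τ))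
        else ((M:ℝ) * A) ^ (k + K) * F 0)
      else ((M:ℝ) * A) ^ (k + K) * F ((1 / (A:ℝ)) ^ (k + K + 2))) =
      if x.1 = m then gT M A k K (fun τ => F (1 / (A:ℝ) * τ)) + (A - 1) * (((M:ℝ) * A) ^ (k + K) * F 0)
      else A * (((M:ℝ) * A) ^ (k + K) * F ((1 / (A:ℝ)) ^ (k + K + 2))) := by
      intro m
      split_ifs
      · rw [sum_fin_if_ne]
      · simp
    simp_rw [h3]
    rw [sum_fin_if_ne]
  simp_rw [h2]
  simp
  unfold gT
  simp
  ring

lemma gwt_sum (hM : 2 ≤ M) (k : ℕ) : ∑ d ∈ Finset.range (k + 1), gwt M d * (M:ℝ) ^ d = (M:ℝ) ^ k := by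
  have : (M:ℝ) ≠ 0 := by positivity
  induction k with
  | zero => simp [gwt]
  | succ k ih =>
    rw [Finset.sum_range_succ, ih]
    simp only [gwt, if_neg (Nat.succ_ne_zero k)]
    rw [pow_succ]
    field_simp
    ring

lemma gT_formula (hM : 2 ≤ M) (hA : 2 ≤ A) (e k : ℕ) : ∀ F : ℝ → ℝ, gT M A k (k + e) F =
    ∑ d ∈ Finset.range (k + 1), gwt M d * (M:ℝ) ^ (k + e + d) *
      ((A:ℝ) ^ (k + e + d) * F ((1 / (A:ℝ)) ^ (k + e + d))
        + ((A:ℝ) ^ (2 * k + e) - (A:ℝ) ^ (k + e + d)) * F 0) := by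
  have hM0 : (M:ℝ) ≠ 0 := by positivity
  induction k with
  | zero =>
    intro F
    rw [gT_zero]
    simp [gwt, mul_pow]
    ring
  | succ k ih =>
    intro F
    rw [show k + 1 + e = (k + e) + 1 by ring, gT_succ, ih, Finset.sum_range_succ _ (k + 1)]
    have hs := gwt_sum hM k
    have h1 : ∑ d ∈ Finset.range (k + 1), gwt M d * (M:ℝ) ^ (k + e + 1 + d) *
      ((A:ℝ) ^ (k + e + 1 + d) * F ((1 / (A:ℝ)) ^ (k + e + 1 + d))
        + ((A:ℝ) ^ (2 * (k + 1) + e) - (A:ℝ) ^ (k + e + 1 + d)) * F 0) =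
      (M:ℝ) * A * ∑ d ∈ Finset.range (k + 1), gwt M d * (M:ℝ) ^ (k + e + d) *
      ((A:ℝ) ^ (k + e + d) * F (1 / (A:ℝ) * (1 / (A:ℝ)) ^ (k + e + d))
        + ((A:ℝ) ^ (2 * k + e) - (A:ℝ) ^ (k + e + d)) * F (1 / (A:ℝ) * 0))
      + (∑ d ∈ Finset.range (k + 1), gwt M d * (M:ℝ) ^ d) * ((M:ℝ) ^ (k + e + 1) * (A:ℝ) ^ (2 * k + e + 1) * (A - 1) * F 0) := by
      rw [Finset.mul_sum, Finset.sum_mul, ← Finset.sum_add_distrib]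
      refine Finset.sum_congr rfl fun d _ => ?_
      rw [mul_zero, show 1 / (A:ℝ) * (1 / (A:ℝ)) ^ (k + e + d) = (1 / (A:ℝ)) ^ (k + e + 1 + d) by ring]
      ring
    rw [h1, hs]
    have hg : gwt (M:ℝ) (k + 1) = 1 - 1 / (M:ℝ) := by simp [gwt]
    rw [hg]
    generalize (∑ d ∈ Finset.range (k + 1), gwt M d * (M:ℝ) ^ (k + e + d) *
      ((A:ℝ) ^ (k + e + d) * F (1 / (A:ℝ) * (1 / (A:ℝ)) ^ (k + e + d))
        + ((A:ℝ) ^ (2 * k + e) - (A:ℝ) ^ (k + e + d)) * F (1 / (A:ℝ) * 0))) = Z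
    rw [show k + (k + e) + 2 = k + e + 1 + (k + 1) by ring,
      show 2 * (k + 1) + e = k + e + 1 + (k + 1) by ring]
    field_simp
    ring

lemma gJ_symm (n : ℕ) (p p' τ : ℝ) : gJ n p p' τ = gJ n p' p τ := by
  unfold gJ; rw [show 1 - p' - p + τ = 1 - p - p' + τ by ring]; ring

/-- covariance level sum -/
noncomputable def gC (M A n k K : ℕ) : ℝ :=
  gT M A k K (fun τ => gJ n ((1 / (A:ℝ)) ^ k) ((1 / (A:ℝ)) ^ K) τ
    - gJ n ((1 / (A:ℝ)) ^ k) ((1 / (A:ℝ)) ^ K) ((1 / (A:ℝ)) ^ k * (1 / (A:ℝ)) ^ K))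

lemma gC_symm (n k K : ℕ) : gC M A n k K = gC M A n K k := by
  unfold gC
  rw [gT_symm]
  congr 1
  ext τ
  rw [gJ_symm, gJ_symm n ((1 / (A:ℝ)) ^ k), mul_comm]

lemma gC_eq (hM : 2 ≤ M) (hA : 2 ≤ A) (n k e : ℕ) : gWe e * gC M A n k (k + e) =
    ∑ d ∈ Finset.range k, gf n M A (((k + e : ℕ) : ℤ), d, e) := by
  have hA0 : (A:ℝ) ≠ 0 := by positivity
  have hz : ∀ j : ℕ, (A:ℝ) ^ (-(j : ℤ)) = (1 / (A:ℝ)) ^ j := by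
    intro j; rw [zpow_neg, zpow_natCast]; simp
  have hi : ∀ j : ℕ, (A:ℝ) ^ j * (1 / (A:ℝ)) ^ j = 1 := by
    intro j; rw [← mul_pow]; field_simp; simp
  set p := (1 / (A:ℝ)) ^ k with hp
  set p' := (1 / (A:ℝ)) ^ (k + e) with hp'
  have hpp : p * p' = (1 / (A:ℝ)) ^ (2 * k + e) := by rw [hp, hp']; ring
  have key : ∀ d : ℕ, (A:ℝ) ^ (k + e + d) * (gJ n p p' ((1 / (A:ℝ)) ^ (k + e + d)) - gJ n p p' (p * p'))
        + ((A:ℝ) ^ (2 * k + e) - (A:ℝ) ^ (k + e + d)) * (gJ n p p' 0 - gJ n p p' (p * p'))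
      = (A:ℝ) ^ (k + e + d) * gR n p p' ((1 / (A:ℝ)) ^ (k + e + d))
        - (A:ℝ) ^ (2 * k + e) * gR n p p' (p * p') := by
    intro d
    have h1 := hi (k + e + d)
    have h2 := hi (2 * k + e)
    rw [← hpp] at h2
    unfold gR
    linear_combination (gJ1 n p p' 0) * h1 - (gJ1 n p p' 0) * h2
  unfold gC
  rw [gT_formula hM hA]
  simp_rw [← hp, ← hp', key]
  rw [Finset.sum_range_succ, show k + e + k = 2 * k + e by ring, hpp, sub_self, mul_zero, add_zero,
    Finset.mul_sum]
  refine Finset.sum_congr rfl fun d hd => ?_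
  rw [Finset.mem_range] at hd
  unfold gf
  rw [if_pos (by simp only; push_cast; omega)]
  simp only
  rw [show ((k + e : ℕ) : ℤ) - (e : ℤ) = (k : ℤ) by push_cast; ring,
    show ((k + e : ℕ) : ℤ) + (d : ℤ) = ((k + e + d : ℕ) : ℤ) by push_cast; ring,
    show 2 * ((k + e : ℕ) : ℤ) - (e : ℤ) = ((2 * k + e : ℕ) : ℤ) by push_cast; ring,
    hz, hz, hz, zpow_natCast, zpow_natCast, zpow_natCast, ← hp, ← hp', hpp]
  ring

lemma sum_sq_symm (c : ℕ → ℕ → ℝ) (hc : ∀ i j, c i j = c j i) (H : ℕ) :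
    ∑ k ∈ Finset.range H, ∑ K ∈ Finset.range H, c k K =
      ∑ K ∈ Finset.range H, ∑ e ∈ Finset.range (K + 1), gWe e * c (K - e) K := by
  induction H with
  | zero => simp
  | succ H ih =>
    have h1 : ∀ k, ∑ K ∈ Finset.range (H + 1), c k K = ∑ K ∈ Finset.range H, c k K + c k H :=
      fun k => Finset.sum_range_succ _ H
    have h2 : ∑ e ∈ Finset.range (H + 1), gWe e * c (H - e) H =
        ∑ k ∈ Finset.range H, c k H + (∑ K ∈ Finset.range H, c H K + c H H) := by
      rw [Finset.sum_range_succ' _ H, ← add_assoc]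
      congr 1
      · rw [← Finset.sum_range_reflect (fun k => c k H), ← Finset.sum_range_reflect (fun k => c H k),
          ← Finset.sum_add_distrib]
        refine Finset.sum_congr rfl fun e he => ?_
        rw [Finset.mem_range] at he
        rw [hc H, show H - 1 - e = H - (e + 1) by omega]
        simp [gWe]; ring
      · simp [gWe]
    rw [Finset.sum_range_succ, Finset.sum_range_succ (fun K => ∑ e ∈ Finset.range (K + 1), gWe e * c (K - e) K) H, h2]
    simp_rw [h1]
    rw [Finset.sum_add_distrib, ih, add_assoc]

lemma gC_sum (hM : 2 ≤ M) (hA : 2 ≤ A) (n H : ℕ) :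
    ∑ k ∈ Finset.range H, ∑ K ∈ Finset.range H, gC M A n k K =
      ∑ i ∈ Finset.range H ×ˢ Finset.range H ×ˢ Finset.range H,
        gf n M A ((i.1 : ℤ), i.2.1, i.2.2) := by
  rw [sum_sq_symm _ (gC_symm n), Finset.sum_product]
  refine Finset.sum_congr rfl fun K hK => ?_
  rw [Finset.mem_range] at hK
  rw [Finset.sum_product_right]
  have hz : ∀ d e : ℕ, K ≤ d + e → gf n M A ((K : ℤ), d, e) = 0 := by
    intro d e h
    unfold gf
    rw [if_neg (by simp only; omega)]
  rw [← Finset.sum_subset (s₁ := Finset.range (K + 1)) (s₂ := Finset.range H)]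
  · refine Finset.sum_congr rfl fun e he => ?_
    rw [Finset.mem_range] at he
    have h := gC_eq hM hA n (K - e) e
    rw [show K - e + e = K by omega] at h
    rw [h]
    refine Finset.sum_subset ?_ ?_
    · intro d hd; rw [Finset.mem_range] at *; omega
    · intro d hd hd'; rw [Finset.mem_range] at *
      exact hz d e (by omega)
  · intro d hd; rw [Finset.mem_range] at *; omega
  · intro e he he'; rw [Finset.mem_range] at *
    exact Finset.sum_eq_zero fun d _ => hz d e (by omega)

lemma gC_lim (hM : 2 ≤ M) (hMA : M < A) (n : ℕ) (hn : 4 ≤ n) :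
    Tendsto (fun H => ∑ k ∈ Finset.range H, ∑ K ∈ Finset.range H, gC M A n k K) atTop
      (𝓝 (∑' i, gf n M A i)) := by
  simp_rw [gC_sum hM (by omega : 2 ≤ A)]
  have hs := (gf_summable n hn M A (by exact_mod_cast hM) (by exact_mod_cast hMA)).hasSum
  let g : ℕ × ℕ × ℕ → GI := fun i => ((i.1 : ℤ), i.2.1, i.2.2)
  have hg : Function.Injective g := by
    rintro ⟨a, b, c⟩ ⟨a', b', c'⟩ h
    simpa [g] using h
  have h2 := (hg.hasSum_iff (f := gf n M A) (by
    rintro ⟨K, d, e⟩ hx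
    unfold gf
    rw [if_neg]
    intro h
    simp only at h
    apply hx
    exact ⟨(K.toNat, d, e), by simp only [g]; rw [Int.toNat_of_nonneg (by omega)]⟩)).2 hs
  refine h2.comp ?_
  refine tendsto_atTop_finset_of_monotone ?_ ?_
  · intro a b hab
    have := Finset.range_mono hab
    exact Finset.product_subset_product this (Finset.product_subset_product this this)
  · rintro ⟨a, b, c⟩
    refine ⟨a + b + c + 1, ?_⟩
    simp only [Finset.mem_product, Finset.mem_range]
    omega

end WordSums

section Prob

open Classical in
/-- indicator of at most one of the coordinates lying in `O` -/
noncomputable def gN1 {Ω : Type*} {n : ℕ} (O : Set Ω) (x : Fin n → Ω) : ℝ :=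
  if Nat.card {i // x i ∈ O} ≤ 1 then 1 else 0

noncomputable def go {Ω : Type*} {n : ℕ} (O : Set Ω) (s : Option (Fin n)) (j : Fin n) (x : Ω) : ℝ :=
  if s = some j then O.indicator 1 x else 1 - O.indicator 1 x

lemma gN1_eq {Ω : Type*} {n : ℕ} (O : Set Ω) (x : Fin n → Ω) :
    gN1 O x = ∑ s : Option (Fin n), ∏ j, go O s j (x j) := by
  classical
  have h1 : ∀ s : Option (Fin n), ∏ j, go O s j (x j) = if (∀ j, s = some j ↔ x j ∈ O) then 1 else 0 := by
    intro s
    have : ∀ j, go O s j (x j) = if (s = some j ↔ x j ∈ O) then 1 else 0 := by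
      intro j
      unfold go
      by_cases hs : s = some j <;> by_cases hx : x j ∈ O <;> simp [hs, hx]
    simp_rw [this]
    rw [Finset.prod_ite_zero]
    simp
  simp_rw [h1]
  rw [Finset.sum_boole]
  unfold gN1
  rw [Nat.card_eq_fintype_card, Fintype.card_subtype]
  split_ifs with h
  · norm_cast
    symm
    rw [Finset.card_eq_one]
    rw [Finset.card_le_one] at h
    simp only [Finset.mem_filter, Finset.mem_univ, true_and] at h
    by_cases hex : ∃ i, x i ∈ O
    · obtain ⟨i, hi⟩ := hex
      refine ⟨some i, ?_⟩
      ext s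
      simp only [Finset.mem_filter, Finset.mem_univ, true_and, Finset.mem_singleton]
      constructor
      · intro H
        exact (H i).2 hi
      · rintro rfl j
        constructor
        · intro hj
          rw [← Option.some.inj hj]; exact hi
        · intro hj
          rw [h i hi j hj]
    · push Not at hex
      refine ⟨none, ?_⟩
      ext s
      simp only [Finset.mem_filter, Finset.mem_univ, true_and, Finset.mem_singleton]
      constructor
      · intro H
        cases s with
        | none => rfl
        | some i => exact absurd ((H i).1 rfl) (hex i)
      · rintro rfl j
        simp [hex j]
  · norm_cast
    symm
    rw [Finset.card_eq_zero, Finset.filter_eq_empty_iff]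
    rintro s - hs
    apply h
    rw [Finset.card_le_one]
    intro a ha b hb
    simp only [Finset.mem_filter, Finset.mem_univ, true_and] at ha hb
    have e1 := (hs a).2 ha
    have e2 := (hs b).2 hb
    rw [e1] at e2
    exact Option.some.inj e2

variable {Ω : Type*} [MeasurableSpace Ω] (μ : Measure Ω) [IsProbabilityMeasure μ]

noncomputable def gh {n : ℕ} (p p' q : ℝ) (s s' : Option (Fin n)) (j : Fin n) : ℝ :=
  if s = some j then (if s' = some j then q else p - q) else (if s' = some j then p' - q else 1 - p - p' + q)

lemma go_meas {n : ℕ} {O : Set Ω} (hO : MeasurableSet O) (s : Option (Fin n)) (j : Fin n) :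
    Measurable (go O s j) := by
  unfold go
  have : Measurable (O.indicator (1 : Ω → ℝ)) := measurable_one.indicator hO
  split_ifs
  · exact this
  · exact this.const_sub 1

lemma go_mul_integrable {n : ℕ} {O O' : Set Ω} (hO : MeasurableSet O) (hO' : MeasurableSet O')
    (s s' : Option (Fin n)) (j : Fin n) : Integrable (fun x => go O s j x * go O' s' j x) μ := by
  refine Integrable.of_bound ((go_meas hO s j).mul (go_meas hO' s' j)).aestronglyMeasurable 1 ?_
  refine Eventually.of_forall fun x => ?_
  have hb : ∀ (O : Set Ω) (s : Option (Fin n)), |go O s j x| ≤ 1 := by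
    intro O s
    unfold go
    by_cases hx : x ∈ O <;> split_ifs <;> simp [hx]
  rw [Real.norm_eq_abs, abs_mul]
  have h1 := hb O s
  have h2 := hb O' s'
  have := abs_nonneg (go O s j x)
  have := abs_nonneg (go O' s' j x)
  nlinarith

lemma go_mul_integral {n : ℕ} {O O' : Set Ω} (hO : MeasurableSet O) (hO' : MeasurableSet O')
    (s s' : Option (Fin n)) (j : Fin n) : ∫ x, go O s j x * go O' s' j x ∂μ =
      gh (μ.real O) (μ.real O') (μ.real (O ∩ O')) s s' j := by
  have iO : Integrable (O.indicator (1 : Ω → ℝ)) μ := (integrable_const (1:ℝ)).indicator hO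
  have iO' : Integrable (O'.indicator (1 : Ω → ℝ)) μ := (integrable_const (1:ℝ)).indicator hO'
  have iOO : Integrable ((O ∩ O').indicator (1 : Ω → ℝ)) μ :=
    (integrable_const (1:ℝ)).indicator (hO.inter hO')
  have e1 : ∫ x, O.indicator (1 : Ω → ℝ) x ∂μ = μ.real O := integral_indicator_one hO
  have e2 : ∫ x, O'.indicator (1 : Ω → ℝ) x ∂μ = μ.real O' := integral_indicator_one hO'
  have e3 : ∫ x, (O ∩ O').indicator (1 : Ω → ℝ) x ∂μ = μ.real (O ∩ O') :=
    integral_indicator_one (hO.inter hO')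
  have hm : ∀ x, O.indicator (1 : Ω → ℝ) x * O'.indicator (1 : Ω → ℝ) x =
      (O ∩ O').indicator (1 : Ω → ℝ) x := by
    intro x
    by_cases hx : x ∈ O <;> by_cases hx' : x ∈ O' <;> simp [hx, hx']
  unfold go gh
  split_ifs
  · simp_rw [hm]; exact e3
  · simp_rw [mul_sub, mul_one, hm]
    rw [integral_sub iO iOO, e1, e3]
  · simp_rw [sub_mul, one_mul, hm]
    rw [integral_sub iO' iOO, e2, e3]
  · have : ∀ x, (1 - O.indicator (1 : Ω → ℝ) x) * (1 - O'.indicator (1 : Ω → ℝ) x) =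
        1 - O.indicator (1 : Ω → ℝ) x - O'.indicator (1 : Ω → ℝ) x + (O ∩ O').indicator (1 : Ω → ℝ) x := by
      intro x; rw [← hm]; ring
    simp_rw [this]
    have i1 : Integrable (fun x => 1 - O.indicator (1 : Ω → ℝ) x) μ := (integrable_const 1).sub iO
    have i2 : Integrable (fun x => 1 - O.indicator (1 : Ω → ℝ) x - O'.indicator (1 : Ω → ℝ) x) μ :=
      i1.sub iO'
    rw [integral_add i2 iOO, integral_sub i1 iO', integral_sub (integrable_const 1) iO, e1, e2, e3]
    simp

lemma gh_sum (n : ℕ) (p p' q : ℝ) :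
    ∑ s : Option (Fin n), ∑ s' : Option (Fin n), ∏ j, gh p p' q s s' j = gJ n p p' q := by
  set r := 1 - p - p' + q with hr
  have h0 : ∏ j : Fin n, gh p p' q none none j = r ^ n := by simp [gh, hr]
  have h1 : ∀ i : Fin n, ∏ j : Fin n, gh p p' q (some i) none j = (p - q) * r ^ (n - 1) := by
    intro i
    rw [← Finset.mul_prod_erase _ _ (Finset.mem_univ i)]
    congr 1
    · simp [gh]
    · rw [Finset.prod_congr rfl (g := fun _ => r), Finset.prod_const]
      · simp
      · intro j hj
        have := (Finset.mem_erase.1 hj).1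
        simp [gh, this.symm, hr]
  have h2 : ∀ i : Fin n, ∏ j : Fin n, gh p p' q none (some i) j = (p' - q) * r ^ (n - 1) := by
    intro i
    rw [← Finset.mul_prod_erase _ _ (Finset.mem_univ i)]
    congr 1
    · simp [gh]
    · rw [Finset.prod_congr rfl (g := fun _ => r), Finset.prod_const]
      · simp
      · intro j hj
        have := (Finset.mem_erase.1 hj).1
        simp [gh, this.symm, hr]
  have h3 : ∀ i i' : Fin n, ∏ j : Fin n, gh p p' q (some i) (some i') j =
      if i = i' then q * r ^ (n - 1) else (p - q) * (p' - q) * r ^ (n - 2) := by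
    intro i i'
    split_ifs with h
    · subst h
      rw [← Finset.mul_prod_erase _ _ (Finset.mem_univ i)]
      congr 1
      · simp [gh]
      · rw [Finset.prod_congr rfl (g := fun _ => r), Finset.prod_const]
        · simp
        · intro j hj
          have := (Finset.mem_erase.1 hj).1
          simp [gh, this.symm, hr]
    · have hi' : i' ∈ Finset.univ.erase i := by simp [Ne.symm h]
      rw [← Finset.mul_prod_erase _ _ (Finset.mem_univ i), ← Finset.mul_prod_erase _ _ hi', ← mul_assoc]
      congr 1
      · simp [gh, h, Ne.symm h]
      · rw [Finset.prod_congr rfl (g := fun _ => r), Finset.prod_const, Finset.card_erase_of_mem hi']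
        · simp [Nat.sub_sub]
        · intro j hj
          have h5 := (Finset.mem_erase.1 hj).1
          have h6 := (Finset.mem_erase.1 (Finset.mem_erase.1 hj).2).1
          simp [gh, h5.symm, h6.symm, hr]
  rw [Fintype.sum_option, Fintype.sum_option]
  simp_rw [Fintype.sum_option, h0, h1, h2, h3, sum_fin_if_ne]
  simp
  unfold gJ
  rw [← hr]
  ring

lemma gN1_integral {n : ℕ} {O O' : Set Ω} (hO : MeasurableSet O) (hO' : MeasurableSet O') :
    ∫ x, gN1 O x * gN1 O' x ∂(Measure.pi fun _ : Fin n => μ) =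
      gJ n (μ.real O) (μ.real O') (μ.real (O ∩ O')) := by
  simp_rw [gN1_eq, Finset.sum_mul_sum, ← Finset.prod_mul_distrib]
  have hInt : ∀ s s' : Option (Fin n), Integrable (fun x : Fin n → Ω => ∏ j, (go O s j (x j) * go O' s' j (x j)))
      (Measure.pi fun _ : Fin n => μ) := fun s s' =>
    Integrable.fintype_prod (f := fun j x => go O s j x * go O' s' j x)
      (fun j => go_mul_integrable μ hO hO' s s' j)
  rw [integral_finsetSum _ fun s _ => integrable_finsetSum _ fun s' _ => hInt s s', ← gh_sum]
  refine Finset.sum_congr rfl fun s _ => ?_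
  rw [integral_finsetSum _ fun s' _ => hInt s s']
  refine Finset.sum_congr rfl fun s' _ => ?_
  rw [integral_fintype_prod_eq_prod (f := fun j x => go O s j x * go O' s' j x)]
  exact Finset.prod_congr rfl fun j _ => go_mul_integral μ hO hO' s s' j

lemma gN1_meas {n : ℕ} {O : Set Ω} (hO : MeasurableSet O) :
    Measurable (fun x : Fin n → Ω => gN1 O x) := by
  simp_rw [gN1_eq]
  exact Finset.measurable_fun_sum _ fun s _ => Finset.measurable_fun_prod _ fun j _ =>
    (go_meas hO s j).comp (measurable_pi_apply j)

lemma gN1_integral1 {n : ℕ} {O : Set Ω} (hO : MeasurableSet O) :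
    ∫ x, gN1 O x ∂(Measure.pi fun _ : Fin n => μ) = gJ n (μ.real O) (μ.real O) (μ.real O) := by
  have := gN1_integral (n := n) μ hO hO
  rw [Set.inter_self] at this
  rw [← this]
  congr 1
  ext x
  unfold gN1
  split_ifs <;> simp

lemma gJ_mul (n : ℕ) (hn : 2 ≤ n) (p p' : ℝ) : gJ n p p' (p * p') = gJ n p p p * gJ n p' p' p' := by
  obtain ⟨m, rfl⟩ := Nat.exists_eq_add_of_le' hn
  have e : 1 - p - p' + p * p' = (1 - p) * (1 - p') := by ring
  have e1 : 1 - p - p + p = 1 - p := by ring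
  have e2 : 1 - p' - p' + p' = 1 - p' := by ring
  unfold gJ
  rw [e, e1, e2, show m + 2 - 1 = m + 1 by omega, show m + 2 - 2 = m by omega, mul_pow, mul_pow, mul_pow]
  push_cast
  ring

lemma gJ_lower (n : ℕ) (p : ℝ) (h0 : 0 ≤ p) (h1 : p ≤ 1) : 1 - gJ n p p p ≤ (n:ℝ) ^ 2 * p ^ 2 := by
  have e : gJ n p p p = (1 - p) ^ n + n * (1 - p) ^ (n - 1) * p := by
    unfold gJ; rw [show 1 - p - p + p = 1 - p by ring]; ring
  rw [e]
  have b1 := one_add_mul_le_pow (a := -p) (by linarith) n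
  have b2 := one_add_mul_le_pow (a := -p) (by linarith) (n - 1)
  rw [← sub_eq_add_neg] at b1 b2
  have hn : ((n - 1 : ℕ) : ℝ) ≤ n := by exact_mod_cast Nat.sub_le n 1
  have hn0 : (0:ℝ) ≤ n := by positivity
  have h3 : (n:ℝ) * p * (1 + n * -p) ≤ n * p * (1 - p) ^ (n - 1) := by
    apply mul_le_mul_of_nonneg_left _ (by positivity)
    nlinarith
  nlinarith

end Prob

section Assembly
variable {M A : ℕ}

noncomputable def gX {n : ℕ} (w : List (Fin M × Fin A)) (Ls : Fin n → List (Fin M) → Fin A) : ℝ :=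
  1 - gN1 (gOc w) Ls

open Classical in
lemma gX_eq {n : ℕ} (w : List (Fin M × Fin A)) (Ls : Fin n → List (Fin M) → Fin A) :
    gX w Ls = if w ∈ GTrie Ls then 1 else 0 := by
  have h : w ∈ GTrie Ls ↔ 2 ≤ Nat.card {i // Ls i ∈ gOc w} := Iff.rfl
  unfold gX gN1
  by_cases h2 : Nat.card {i // Ls i ∈ gOc w} ≤ 1
  · rw [if_pos h2, if_neg (by rw [h]; omega)]; ring
  · rw [if_neg h2, if_pos (by rw [h]; omega)]; ring

lemma gX_meas {n : ℕ} (w : List (Fin M × Fin A)) :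
    Measurable (fun Ls : Fin n → List (Fin M) → Fin A => gX w Ls) :=
  (gN1_meas (gOc_meas w)).const_sub 1

lemma gX_nonneg {n : ℕ} (w : List (Fin M × Fin A)) (Ls : Fin n → List (Fin M) → Fin A) :
    0 ≤ gX w Ls := by
  classical
  rw [gX_eq]; split_ifs <;> norm_num

lemma gX_abs {n : ℕ} (w : List (Fin M × Fin A)) (Ls : Fin n → List (Fin M) → Fin A) :
    ‖gX w Ls‖ ≤ 1 := by
  classical
  rw [gX_eq]; split_ifs <;> norm_num

lemma gN1_abs {Ω : Type*} {n : ℕ} (O : Set Ω) (x : Fin n → Ω) : ‖gN1 O x‖ ≤ 1 := by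
  unfold gN1; split_ifs <;> norm_num

def gW (M A H : ℕ) : Finset (List (Fin M × Fin A)) := (Finset.range H).biUnion (gwl M A)

lemma mem_gW (H : ℕ) (w : List (Fin M × Fin A)) : w ∈ gW M A H ↔ w.length < H := by
  simp [gW, mem_gwl]

lemma gW_sum (H : ℕ) (f : List (Fin M × Fin A) → ℝ) :
    ∑ w ∈ gW M A H, f w = ∑ k ∈ Finset.range H, ∑ w ∈ gwl M A k, f w := by
  unfold gW
  rw [Finset.sum_biUnion]
  intro i _ j _ hij
  rw [Function.onFun, Finset.disjoint_left]
  intro w hw hw'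
  rw [mem_gwl] at hw hw'
  exact hij (hw.symm.trans hw')

noncomputable def gS {n : ℕ} (H : ℕ) (Ls : Fin n → List (Fin M) → Fin A) : ℝ :=
  ∑ w ∈ gW M A H, gX w Ls

lemma gS_nonneg {n : ℕ} (H : ℕ) (Ls : Fin n → List (Fin M) → Fin A) : 0 ≤ gS H Ls :=
  Finset.sum_nonneg fun w _ => gX_nonneg w Ls

lemma gS_meas {n : ℕ} (H : ℕ) : Measurable (fun Ls : Fin n → List (Fin M) → Fin A => gS H Ls) :=
  Finset.measurable_fun_sum _ fun w _ => gX_meas w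

lemma gS_le {n : ℕ} (H : ℕ) (Ls : Fin n → List (Fin M) → Fin A) (hfin : (GTrie Ls).Finite) :
    gS H Ls ≤ gtrieSize Ls := by
  classical
  unfold gS gtrieSize
  simp_rw [gX_eq]
  rw [Finset.sum_boole, Set.ncard_eq_toFinset_card _ hfin]
  norm_cast
  apply Finset.card_le_card
  intro w hw
  simpa using (Finset.mem_filter.1 hw).2

lemma gS_eventually {n : ℕ} (Ls : Fin n → List (Fin M) → Fin A) (hfin : (GTrie Ls).Finite) :
    ∀ᶠ H in atTop, gS H Ls = gtrieSize Ls := by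
  classical
  obtain ⟨N, hN⟩ : ∃ N, ∀ w ∈ hfin.toFinset, w.length < N := by
    refine ⟨hfin.toFinset.sup List.length + 1, fun w hw => ?_⟩
    exact Nat.lt_succ_of_le (Finset.le_sup (f := List.length) hw)
  filter_upwards [eventually_ge_atTop N] with H hH
  unfold gS gtrieSize
  simp_rw [gX_eq]
  rw [Finset.sum_boole, Set.ncard_eq_toFinset_card _ hfin]
  congr 2
  ext w
  simp only [Finset.mem_filter, mem_gW, Set.Finite.mem_toFinset]
  constructor
  · exact fun h => h.2
  · intro h
    exact ⟨(hN w (by simpa using h)).trans_le hH, h⟩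

variable (μL : Measure (List (Fin M) → Fin A)) [IsProbabilityMeasure μL]

lemma gX_memLp (n : ℕ) (w : List (Fin M × Fin A)) :
    MemLp (fun Ls : Fin n → List (Fin M) → Fin A => gX w Ls) 2 (Measure.pi fun _ => μL) :=
  MemLp.of_bound (gX_meas w).aestronglyMeasurable 1 (Eventually.of_forall fun Ls => gX_abs w Ls)

lemma gN1_memLp (n : ℕ) (w : List (Fin M × Fin A)) :
    MemLp (fun Ls : Fin n → List (Fin M) → Fin A => gN1 (gOc w) Ls) 2 (Measure.pi fun _ => μL) :=
  MemLp.of_bound (gN1_meas (gOc_meas w)).aestronglyMeasurable 1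
    (Eventually.of_forall fun Ls => gN1_abs _ Ls)

lemma gX_cov (p : Fin A → ℝ) (hp : ∀ j, p j = 1 / (A : ℝ))
    (μL : Measure (List (Fin M) → Fin A)) [IsProbabilityMeasure μL] (hμL : IsLabelingMeasure p μL)
    (hA : 2 ≤ A) (n : ℕ) (hn : 2 ≤ n) (w w' : List (Fin M × Fin A)) :
    covariance (fun Ls : Fin n → List (Fin M) → Fin A => gX w Ls) (fun Ls => gX w' Ls)
      (Measure.pi fun _ => μL) =
    gJ n ((1 / (A:ℝ)) ^ w.length) ((1 / (A:ℝ)) ^ w'.length) (gqq (1 / (A:ℝ)) w w') -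
    gJ n ((1 / (A:ℝ)) ^ w.length) ((1 / (A:ℝ)) ^ w'.length)
      ((1 / (A:ℝ)) ^ w.length * (1 / (A:ℝ)) ^ w'.length) := by
  have m1 := gN1_memLp μL n w
  have m2 := gN1_memLp μL n w'
  unfold gX
  rw [covariance_const_sub_left (m1.integrable (by norm_num)),
    covariance_const_sub_right (m2.integrable (by norm_num)), neg_neg, covariance_eq_sub m1 m2]
  have e := gN1_integral (n := n) μL (gOc_meas w) (gOc_meas w')
  have e1 := gN1_integral1 (n := n) μL (gOc_meas w)
  have e2 := gN1_integral1 (n := n) μL (gOc_meas w')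
  rw [gOc_prob hA p hp μL hμL, gOc_prob hA p hp μL hμL, gOc_prob2 hA p hp μL hμL] at e
  rw [gOc_prob hA p hp μL hμL] at e1 e2
  rw [gJ_mul n hn, ← e, ← e1, ← e2]
  rfl

lemma gS_var (p : Fin A → ℝ) (hp : ∀ j, p j = 1 / (A : ℝ))
    (μL : Measure (List (Fin M) → Fin A)) [IsProbabilityMeasure μL] (hμL : IsLabelingMeasure p μL)
    (hA : 2 ≤ A) (n : ℕ) (hn : 2 ≤ n) (H : ℕ) :
    variance (fun Ls : Fin n → List (Fin M) → Fin A => gS H Ls) (Measure.pi fun _ => μL) =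
      ∑ k ∈ Finset.range H, ∑ K ∈ Finset.range H, gC M A n k K := by
  rw [← covariance_self (gS_meas H).aemeasurable]
  unfold gS
  rw [covariance_fun_sum_fun_sum' (fun w _ => gX_memLp μL n w) (fun w _ => gX_memLp μL n w)]
  rw [gW_sum]
  refine Finset.sum_congr rfl fun k _ => ?_
  simp_rw [gW_sum]
  rw [Finset.sum_comm]
  refine Finset.sum_congr rfl fun K _ => ?_
  unfold gC gT
  refine Finset.sum_congr rfl fun w hw => Finset.sum_congr rfl fun w' hw' => ?_
  rw [gX_cov p hp μL hμL hA n hn, (mem_gwl _ _).1 hw, (mem_gwl _ _).1 hw']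

lemma gX_mean (p : Fin A → ℝ) (hp : ∀ j, p j = 1 / (A : ℝ))
    (μL : Measure (List (Fin M) → Fin A)) [IsProbabilityMeasure μL] (hμL : IsLabelingMeasure p μL)
    (hA : 2 ≤ A) (n : ℕ) (w : List (Fin M × Fin A)) :
    ∫ Ls : Fin n → List (Fin M) → Fin A, gX w Ls ∂(Measure.pi fun _ => μL) ≤
      (n:ℝ) ^ 2 * ((1 / (A:ℝ)) ^ w.length) ^ 2 := by
  unfold gX
  rw [integral_sub (integrable_const 1) ((gN1_memLp μL n w).integrable (by norm_num)),
    gN1_integral1 (n := n) μL (gOc_meas w), gOc_prob hA p hp μL hμL]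
  simp only [integral_const, probReal_univ, smul_eq_mul, one_mul]
  have hA1 : (1:ℝ) ≤ A := by exact_mod_cast (by omega : 1 ≤ A)
  apply gJ_lower
  · positivity
  · apply pow_le_one₀ (by positivity)
    rw [div_le_one (by linarith)]; exact hA1

lemma gX_mean_sum (hM : 2 ≤ M) (hMA : M < A) (p : Fin A → ℝ) (hp : ∀ j, p j = 1 / (A : ℝ))
    (μL : Measure (List (Fin M) → Fin A)) [IsProbabilityMeasure μL] (hμL : IsLabelingMeasure p μL)
    (n : ℕ) (H : ℕ) :
    ∑ w ∈ gW M A H, ∫ Ls : Fin n → List (Fin M) → Fin A, gX w Ls ∂(Measure.pi fun _ => μL) ≤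
      (n:ℝ) ^ 2 * (1 - (M:ℝ) / A)⁻¹ := by
  have hA0 : (0:ℝ) < A := by exact_mod_cast (by omega : 0 < A)
  have hM0 : (0:ℝ) < M := by exact_mod_cast (by omega : 0 < M)
  have hlt : (M:ℝ) / A < 1 := by rw [div_lt_one hA0]; exact_mod_cast hMA
  calc _ ≤ ∑ w ∈ gW M A H, (n:ℝ) ^ 2 * ((1 / (A:ℝ)) ^ w.length) ^ 2 :=
        Finset.sum_le_sum fun w _ => gX_mean p hp μL hμL (by omega) n w
    _ = ∑ k ∈ Finset.range H, (n:ℝ) ^ 2 * ((M:ℝ) / A) ^ k := by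
        rw [gW_sum]
        refine Finset.sum_congr rfl fun k _ => ?_
        rw [Finset.sum_congr rfl (g := fun _ => (n:ℝ) ^ 2 * ((1 / (A:ℝ)) ^ k) ^ 2)
          (fun w hw => by rw [(mem_gwl _ _).1 hw]), gwl_sum_const]
        simp only [div_pow, mul_pow, one_pow]
        field_simp
    _ = (n:ℝ) ^ 2 * ∑ k ∈ Finset.range H, ((M:ℝ) / A) ^ k := by rw [Finset.mul_sum]
    _ ≤ _ := by
        gcongr
        rw [← tsum_geometric_of_lt_one (by positivity) hlt]
        exact (summable_geometric_of_lt_one (by positivity) hlt).sum_le_tsum _ (fun _ _ => by positivity)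

lemma gtrie_finite (hM : 2 ≤ M) (hMA : M < A) (p : Fin A → ℝ) (hp : ∀ j, p j = 1 / (A : ℝ))
    (μL : Measure (List (Fin M) → Fin A)) [IsProbabilityMeasure μL] (hμL : IsLabelingMeasure p μL)
    (n : ℕ) :
    ∀ᵐ Ls ∂(Measure.pi fun _ : Fin n => μL), (GTrie Ls).Finite := by
  classical
  set ν := (Measure.pi fun _ : Fin n => μL) with hν
  have hmeas : ∀ w : List (Fin M × Fin A), MeasurableSet {Ls : Fin n → List (Fin M) → Fin A | w ∈ GTrie Ls} := by
    intro w
    have : {Ls : Fin n → List (Fin M) → Fin A | w ∈ GTrie Ls} = (fun Ls => gX w Ls) ⁻¹' {1} := by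
      ext Ls
      simp [gX_eq]
    rw [this]
    exact gX_meas w (measurableSet_singleton _)
  have hI : ∀ w : List (Fin M × Fin A), ν {Ls | w ∈ GTrie Ls} = ENNReal.ofReal (∫ Ls, gX w Ls ∂ν) := by
    intro w
    have : (fun Ls : Fin n → List (Fin M) → Fin A => gX w Ls) =
        {Ls : Fin n → List (Fin M) → Fin A | w ∈ GTrie Ls}.indicator 1 := by
      ext Ls
      simp [gX_eq, Set.indicator]
    rw [this, integral_indicator_one (hmeas w), Measure.real, ENNReal.ofReal_toReal (measure_ne_top _ _)]
  have hnn : ∀ w : List (Fin M × Fin A), 0 ≤ ∫ Ls, gX w Ls ∂ν := fun w =>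
    integral_nonneg fun Ls => gX_nonneg w Ls
  have hs : Summable (fun w : List (Fin M × Fin A) => ∫ Ls, gX w Ls ∂ν) := by
    refine summable_of_sum_le hnn (c := (n:ℝ) ^ 2 * (1 - (M:ℝ) / A)⁻¹) fun F => ?_
    refine le_trans ?_ (gX_mean_sum hM hMA p hp μL hμL n (F.sup List.length + 1))
    apply Finset.sum_le_sum_of_subset_of_nonneg
    · intro w hw
      rw [mem_gW]
      exact Nat.lt_succ_of_le (Finset.le_sup (f := List.length) hw)
    · intro w _ _; exact hnn w
  have := ae_finite_setOfPred_mem (μ := ν) (s := fun w : List (Fin M × Fin A) => {Ls | w ∈ GTrie Ls}) (by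
    simp_rw [hI]
    rw [← ENNReal.ofReal_tsum_of_nonneg hnn hs]
    exact ENNReal.ofReal_ne_top)
  exact this

lemma gtrie_var (hM : 2 ≤ M) (hMA : M < A) (p : Fin A → ℝ) (hp : ∀ j, p j = 1 / (A : ℝ))
    (μL : Measure (List (Fin M) → Fin A)) [IsProbabilityMeasure μL] (hμL : IsLabelingMeasure p μL)
    (n : ℕ) (hn : 4 ≤ n) :
    variance (fun Ls : Fin n → List (Fin M) → Fin A => gtrieSize Ls) (Measure.pi fun _ => μL) =
      ∑' i, gf n M A i := by
  set ν := (Measure.pi fun _ : Fin n => μL) with hν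
  have hfin := gtrie_finite hM hMA p hp μL hμL n
  have hvar : Tendsto (fun H => variance (fun Ls : Fin n → List (Fin M) → Fin A => gS H Ls) ν) atTop
      (𝓝 (∑' i, gf n M A i)) := by
    have := gC_lim hM hMA n hn
    refine this.congr fun H => ?_
    rw [gS_var p hp μL hμL (by omega) n (by omega)]
  have hmem : ∀ H, MemLp (fun Ls : Fin n → List (Fin M) → Fin A => gS H Ls) 2 ν := fun H =>
    memLp_finsetSum _ fun w _ => gX_memLp μL n w
  have hmean : ∀ H, ∫ Ls, gS H Ls ∂ν ≤ (n:ℝ) ^ 2 * (1 - (M:ℝ) / A)⁻¹ := by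
    intro H
    unfold gS
    rw [integral_finsetSum _ fun w _ => (gX_memLp μL n w).integrable (by norm_num)]
    exact gX_mean_sum hM hMA p hp μL hμL n H
  have hlim : ∀ᵐ Ls ∂ν, Tendsto (fun H => gS H Ls) atTop (𝓝 (gtrieSize Ls)) := by
    filter_upwards [hfin] with Ls h
    exact tendsto_const_nhds.congr' ((gS_eventually Ls h).mono fun H hH => hH.symm)
  have hmeasS : AEStronglyMeasurable (fun Ls : Fin n → List (Fin M) → Fin A => gtrieSize Ls) ν :=
    aestronglyMeasurable_of_tendsto_ae atTop (fun H => (gS_meas H).aestronglyMeasurable) hlim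
  obtain ⟨B, hB⟩ := hvar.bddAbove_range
  have hsq : ∀ H, ∫ Ls, gS H Ls ^ 2 ∂ν ≤ B + ((n:ℝ) ^ 2 * (1 - (M:ℝ) / A)⁻¹) ^ 2 := by
    intro H
    have h1 := variance_eq_sub (hmem H)
    have h2 : variance (fun Ls : Fin n → List (Fin M) → Fin A => gS H Ls) ν ≤ B := hB ⟨H, rfl⟩
    have h3 := hmean H
    have h4 : 0 ≤ ∫ Ls, gS H Ls ∂ν := integral_nonneg fun Ls => gS_nonneg H Ls
    have h5 : (∫ Ls, gS H Ls ∂ν) ^ 2 ≤ ((n:ℝ) ^ 2 * (1 - (M:ℝ) / A)⁻¹) ^ 2 := by gcongr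
    have h6 : ∫ Ls, gS H Ls ^ 2 ∂ν = variance (fun Ls : Fin n → List (Fin M) → Fin A => gS H Ls) ν +
        (∫ Ls, gS H Ls ∂ν) ^ 2 := by rw [h1]; simp
    linarith
  have hsqlim : ∀ᵐ Ls ∂ν, Tendsto (fun H => gS H Ls ^ 2) atTop (𝓝 (gtrieSize Ls ^ 2)) := by
    filter_upwards [hlim] with Ls h using h.pow 2
  have hint2 : Integrable (fun Ls : Fin n → List (Fin M) → Fin A => gtrieSize Ls ^ 2) ν := by
    rw [← memLp_one_iff_integrable]
    refine ⟨hmeasS.pow 2, ?_⟩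
    have h1 := Lp.eLpNorm_lim_le_liminf_eLpNorm (p := 1) (μ := ν)
      (f := fun H (Ls : Fin n → List (Fin M) → Fin A) => gS H Ls ^ 2)
      (fun H => ((gS_meas H).pow_const 2).aestronglyMeasurable) _ hsqlim
    refine h1.trans_lt (lt_of_le_of_lt (b := ENNReal.ofReal (B + ((n:ℝ) ^ 2 * (1 - (M:ℝ) / A)⁻¹) ^ 2))
      ?_ ENNReal.ofReal_lt_top)
    refine liminf_le_of_frequently_le' (Frequently.of_forall fun H => ?_)
    rw [eLpNorm_one_eq_lintegral_enorm, ← ofReal_integral_norm_eq_lintegral_enorm (hmem H).integrable_sq]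
    apply ENNReal.ofReal_le_ofReal
    refine le_trans (le_of_eq ?_) (hsq H)
    congr 1
    ext Ls
    rw [Real.norm_eq_abs, abs_of_nonneg (by positivity)]
  have hmemS : MemLp (fun Ls : Fin n → List (Fin M) → Fin A => gtrieSize Ls) 2 ν :=
    (memLp_two_iff_integrable_sq hmeasS).2 hint2
  have L1 : Tendsto (fun H => ∫ Ls, gS H Ls ∂ν) atTop (𝓝 (∫ Ls, gtrieSize Ls ∂ν)) := by
    refine tendsto_integral_of_dominated_convergence _ (fun H => (gS_meas H).aestronglyMeasurable)
      (hmemS.integrable (by norm_num)) (fun H => ?_) hlim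
    filter_upwards [hfin] with Ls h
    rw [Real.norm_eq_abs, abs_of_nonneg (gS_nonneg H Ls)]
    exact gS_le H Ls h
  have L2 : Tendsto (fun H => ∫ Ls, gS H Ls ^ 2 ∂ν) atTop (𝓝 (∫ Ls, gtrieSize Ls ^ 2 ∂ν)) := by
    refine tendsto_integral_of_dominated_convergence _
      (fun H => ((gS_meas H).pow_const 2).aestronglyMeasurable)
      hint2 (fun H => ?_) hsqlim
    filter_upwards [hfin] with Ls h
    rw [Real.norm_eq_abs, abs_of_nonneg (by positivity)]
    have := gS_le H Ls h
    have := gS_nonneg H Ls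
    gcongr
  have L3 := L2.sub (L1.pow 2)
  refine tendsto_nhds_unique ?_ hvar
  rw [variance_eq_sub hmemS]
  refine L3.congr fun H => ?_
  rw [variance_eq_sub (hmem H)]
  rfl

end Assembly

/-- **Variance of the size of a G-trie, uniform case** (Proposition 2(i)).
In the uniform case `p_1 = … = p_A = 1/A` with `M ≥ 2` (and `M < A`, the non-explosive
condition), with `ρ = 1 + log_A M > 1`, there is a continuous positive 1-periodic function
`P_V` such that `Var(S_n) = P_V(log_A n) · n^ρ · (1 + o(1))` as `n → ∞`. -/
theorem gtrie_variance_uniform_case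
    {M A : ℕ} (hM : 2 ≤ M) (hA : 2 ≤ A) (hMA : M < A)
    (p : Fin A → ℝ) (hp : ∀ j, p j = 1 / (A : ℝ))
    (ρ : ℝ) (hρ : ρ = 1 + Real.logb A M)
    (μL : Measure (List (Fin M) → Fin A)) [IsProbabilityMeasure μL]
    (hμL : IsLabelingMeasure p μL)
    (μ : (n : ℕ) → Measure (Fin n → List (Fin M) → Fin A))
    (hμ : ∀ n, μ n = Measure.pi fun _ => μL)
    (V : ℕ → ℝ)
    (hV : ∀ n, V n = variance (fun Ls => gtrieSize Ls) (μ n)) :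
    ∃ PV : ℝ → ℝ, Continuous PV ∧ (∀ x, PV (x + 1) = PV x) ∧ (∀ x, 0 < PV x) ∧
      ∃ e : ℕ → ℝ, Tendsto e atTop (𝓝 0) ∧
        ∀ᶠ n : ℕ in atTop, V n = PV (Real.logb A n) * (n : ℝ) ^ ρ * (1 + e n) := by
  refine gfinal hM hMA ρ hρ V fun n hn => ?_
  rw [hV n, hμ n]
  exact gtrie_var hM hMA p hp μL hμL n hn
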